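/- Let k be a natural number and let s and m be non-negative integers with 2m ≤ k and s ≥ (k−m)² + (k−m). Then for each ε > 0 there exists a constant C = C(s,k,ε) > 0 such that for all real X ≥ 1 one has J_{s,k}(X) ≤ C·X^{2s − k(k+1)/2 + m² + ε}. -/

import Mathlib

/-- Number of integral solutions of the Vinogradov system
of degree k in 2s variables, all lying in [1, X]. -/
noncomputable def Jcount (s k : ℕ) (X : ℝ) : ℕ :=
  Set.ncard {xy : (Fin s → ℤ) × (Fin s → ℤ) |
    (∀ i, 1 ≤ xy.1 i ∧ (xy.1 i : ℝ) ≤ X) ∧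
    (∀ i, 1 ≤ xy.2 i ∧ (xy.2 i : ℝ) ≤ X) ∧
    ∀ j ∈ Finset.Icc 1 k, ∑ i, ((xy.1 i) ^ j - (xy.2 i) ^ j) = 0}

/-! The key fact is `p`-adic decoupling for the moment curve `(x, x², …, x^k)`: the moment of
order `k(k+1)` of an exponential sum with frequencies on the curve is, up to a loss `p^{εn}`, at
most `p^{n(k(k+1)/2 - 1)}` times the sum of the same moments of its parts in the residue classes
modulo `p^n`. One argues by induction on `k` and, for fixed `k`, lowers the exponent of the loss.

Suppose that the loss is at most `p^{ηn}`. By a broad–narrow reduction it suffices to improve this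
for a mixed moment of two transverse sums, that is, sums without a common residue class modulo
`p`, which enter to the powers `l(l+1)` and `k(k+1) - l(l+1)`. Restrict the second sum to the
class of `y` modulo `p^b`. A polynomial divisible by a high power of `x - y` defines a translation
of the dual group that does not change the modulus of this restricted sum. Near a point `ξ` of the
first sum such polynomials realize every Taylor expansion of order `l`: the relevant determinant
of Taylor coefficients of monomials is a unit, since `ξ - y` is one and `p > k`. Thus the first
sum, restricted to a class modulo `p^a`, can be decoupled as if its frequencies were on a moment
curve of degree `l < k`, as long as `l a ≤ (k - l + 1) b`. Hölder's inequality bounds the mixed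
moment for `l` by those for `l - 1` and, with the two sums exchanged, for `k - l`.

Let `p^{γ_l b}` be the gain over the bound that the loss `p^{ηn}` suggests for the mixed moments,
so that `γ_0 = η`. One round of congruencing and interpolation replaces the `γ_l` by linear
combinations of them for which the sum over `0 < l < k` grows by a fixed positive multiple of `η`.
After boundedly many rounds some `γ_l` outweighs the trivial losses, and `η` can be lowered by an
amount depending only on `p`, `k` and `ε`, as long as `η ≥ ε`.

By orthogonality `J_{s,k}(X)` is at most a normalized moment of order `2s` over `(ℤ/M)^k`, where
`M = p^{kn}` and `p^n` is comparable to `X`. It is compared with the moment of order `k(k+1)` by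
bounding the exponential sum `S` pointwise, by `X` where `|S|² ≥ X` and by `X^{1/2}` elsewhere. -/

open Finset Polynomial

namespace Vinogradov

theorem sum_pow_le_sum_mul_sum_pow_of_pow_eq_mul_pow {ι : Type*} {s : Finset ι} {x A B : ι → ℝ}
    {m : ℕ} (hx : ∀ i ∈ s, 0 ≤ x i) (hA : ∀ i ∈ s, 0 ≤ A i) (hB : ∀ i ∈ s, 0 ≤ B i)
    (h : ∀ i ∈ s, x i ^ (m + 1) = A i * B i ^ m) :
    (∑ i ∈ s, x i) ^ (m + 1) ≤ (∑ i ∈ s, A i) * (∑ i ∈ s, B i) ^ m := by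
  rcases m.eq_zero_or_pos with rfl | hm
  · simpa using (sum_congr rfl (by simpa using h)).le
  set r : ℝ := m + 1
  have hr : 0 < r := by positivity
  have hm' : (0 : ℝ) < m := by exact_mod_cast hm
  have root_pow : ∀ {t u : ℝ}, 0 ≤ t → 0 ≤ u →
      (t ^ (1 / r) * u ^ (m / r)) ^ (m + 1) = t * u ^ m := fun {t u} ht hu => by
    rw [mul_pow, ← Real.rpow_mul_natCast ht, ← Real.rpow_mul_natCast hu]
    push_cast
    rw [one_div_mul_cancel hr.ne', div_mul_cancel₀ _ hr.ne', Real.rpow_one, Real.rpow_natCast]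
  have hroot : ∀ i ∈ s, x i = A i ^ (1 / r) * B i ^ (m / r) := fun i hi =>
    (pow_left_inj₀ (hx i hi) (mul_nonneg (Real.rpow_nonneg (hA i hi) _)
      (Real.rpow_nonneg (hB i hi) _)) m.succ_ne_zero).1
      ((h i hi).trans (root_pow (hA i hi) (hB i hi)).symm)
  have hconj : r.HolderConjugate (r / m) := by
    rw [Real.holderConjugate_iff]
    exact ⟨by simpa [r] using hm, by simp only [r]; field_simp; ring⟩
  have holder := Real.inner_le_Lp_mul_Lq_of_nonneg s hconj
    (fun i hi => Real.rpow_nonneg (hA i hi) (1 / r))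
    (fun i hi => Real.rpow_nonneg (hB i hi) (m / r))
  have hA_pow : ∑ i ∈ s, (A i ^ (1 / r)) ^ r = ∑ i ∈ s, A i := sum_congr rfl fun i hi => by
    rw [← Real.rpow_mul (hA i hi), one_div_mul_cancel hr.ne', Real.rpow_one]
  have hB_pow : ∑ i ∈ s, (B i ^ (m / r)) ^ (r / m) = ∑ i ∈ s, B i := sum_congr rfl fun i hi => by
    rw [← Real.rpow_mul (hB i hi), div_mul_div_cancel₀ hr.ne', div_self hm'.ne', Real.rpow_one]
  rw [← sum_congr rfl hroot, one_div_div, hA_pow, hB_pow] at holder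
  exact (pow_le_pow_left₀ (sum_nonneg hx) holder _).trans_eq
    (root_pow (sum_nonneg hA) (sum_nonneg hB))

theorem norm_sum_pow_le_card_pow_mul_sum {ι E : Type*} [SeminormedAddCommGroup E] (s : Finset ι)
    (f : ι → E) (q : ℕ) :
    ‖∑ i ∈ s, f i‖ ^ (q + 1) ≤ (#s : ℝ) ^ q * ∑ i ∈ s, ‖f i‖ ^ (q + 1) := by
  rcases s.eq_empty_or_nonempty with rfl | hs
  · simp
  have hc : (0 : ℝ) < (#s : ℝ) ^ q := by have := hs.card_pos; positivity
  calc ‖∑ i ∈ s, f i‖ ^ (q + 1) ≤ (∑ i ∈ s, ‖f i‖) ^ (q + 1) := by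
        gcongr; exact norm_sum_le _ _
    _ ≤ (#s : ℝ) ^ q * ∑ i ∈ s, ‖f i‖ ^ (q + 1) := (div_le_iff₀' hc).1
        (pow_sum_div_card_le_sum_pow (fun _ _ => norm_nonneg _) q)

theorem sum_range_mul {α : Type*} [AddCommMonoid α] (A B : ℕ) (F : ℕ → α) :
    ∑ z ∈ range (A * B), F z = ∑ x ∈ range A, ∑ y ∈ range B, F (x + A * y) := by
  rw [sum_comm]
  induction B with
  | zero => simp
  | succ B ih =>
    rw [Nat.mul_succ, sum_range_add, ih, sum_range_succ]
    simp only [add_comm]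

theorem sum_norm_sum_mul_addChar_sq {G ι : Type*} [AddCommGroup G] [Fintype G]
    [DecidableEq (AddChar G ℂ)] (s : Finset ι) (A : ι → ℂ) (ψ : ι → AddChar G ℂ) :
    ((∑ g, ‖∑ i ∈ s, A i * ψ i g‖ ^ 2 : ℝ) : ℂ)
      = Fintype.card G * ∑ i ∈ s, ∑ j ∈ s, if ψ i = ψ j then A i * star (A j) else 0 := by
  have expand : ∀ g, ((‖∑ i ∈ s, A i * ψ i g‖ ^ 2 : ℝ) : ℂ)
      = ∑ i ∈ s, ∑ j ∈ s, A i * star (A j) * (ψ i - ψ j) g := fun g => by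
    rw [← Complex.normSq_eq_norm_sq, ← Complex.mul_conj, map_sum, sum_mul_sum]
    refine sum_congr rfl fun i _ => sum_congr rfl fun j _ => ?_
    rw [AddChar.sub_apply, AddChar.map_neg_eq_conj, map_mul, starRingEnd_apply]
    ring
  push_cast at expand ⊢
  simp_rw [expand]
  rw [sum_comm, mul_sum]
  refine sum_congr rfl fun i _ => ?_
  rw [sum_comm, mul_sum]
  refine sum_congr rfl fun j _ => ?_
  rw [← mul_sum, AddChar.sum_eq_ite]
  simp only [sub_eq_zero]
  split_ifs <;> ring

theorem toCircle_mul_intCast (D E : ℕ) [NeZero D] [NeZero (D * E)] (x : ℤ) :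
    ZMod.toCircle ((E * x : ℤ) : ZMod (D * E)) = ZMod.toCircle (x : ZMod D) := by
  have hE : (E : ℂ) ≠ 0 := by exact_mod_cast right_ne_zero_of_mul (NeZero.ne (D * E))
  ext
  rw [ZMod.toCircle_intCast, ZMod.toCircle_intCast]
  push_cast
  rw [← mul_assoc, mul_right_comm _ (E : ℂ), mul_div_mul_right _ _ hE]

section MomentCurve

variable {k M : ℕ} [NeZero M]

/-- The character of `(ℤ/M)^k` attached to the point `(x, x², …, x^k)` of the moment curve. -/
noncomputable def momentChar (x : ℤ) : AddChar (Fin k → ZMod M) Circle :=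
  ZMod.toCircle.compAddMonoidHom
    (Fintype.linearCombination (ZMod M) fun j : Fin k => (x : ZMod M) ^ (j + 1 : ℕ)).toAddMonoidHom

theorem momentChar_apply (x : ℤ) (g : Fin k → ZMod M) :
    momentChar x g = ZMod.toCircle (∑ j, g j * (x : ZMod M) ^ (j + 1 : ℕ)) := rfl

theorem exists_momentChar_eq_eval {D : ℕ} [NeZero D] (hD : D ∣ M) {P : (ZMod D)[X]}
    (hP : P.natDegree ≤ k) :
    ∃ (v : Fin k → ZMod M) (κ : Circle), ∀ x : ℤ,
      momentChar x v = κ * ZMod.toCircle (P.eval (x : ZMod D)) := by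
  obtain ⟨E, rfl⟩ := hD
  refine ⟨fun j => ((E * (P.coeff (j + 1)).val : ℤ) : ZMod (D * E)),
    (ZMod.toCircle (P.coeff 0))⁻¹, fun x => ?_⟩
  have heval : P.eval (x : ZMod D)
      = P.coeff 0 + ((∑ j : Fin k, (P.coeff (j + 1)).val * x ^ (j + 1 : ℕ) : ℤ) : ZMod D) := by
    rw [eval_eq_sum_range' (Nat.lt_succ_of_le hP), sum_range_succ', add_comm, sum_range]
    simp
  rw [heval, AddChar.map_add_eq_mul, inv_mul_cancel_left, ← toCircle_mul_intCast D E,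
    momentChar_apply]
  push_cast
  simp only [mul_sum, mul_assoc]

/-- The exponential sum `∑ f(x) ψ_x(g)` over the characters `ψ_x` of the moment curve. -/
noncomputable def expSum (f : ℤ →₀ ℂ) (g : Fin k → ZMod M) : ℂ :=
  Finsupp.linearCombination ℂ (fun x => (momentChar x g : ℂ)) f

theorem expSum_eq_sum (f : ℤ →₀ ℂ) (g : Fin k → ZMod M) :
    expSum f g = ∑ x ∈ f.support, f x * momentChar x g := rfl

theorem expSum_sum {ι : Type*} (s : Finset ι) (f : ι → ℤ →₀ ℂ) (g : Fin k → ZMod M) :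
    expSum (∑ i ∈ s, f i) g = ∑ i ∈ s, expSum (f i) g :=
  map_sum _ _ _

theorem expSum_add_of_momentChar_eq {f : ℤ →₀ ℂ} {v : Fin k → ZMod M} {κ : Circle}
    (hv : ∀ x ∈ f.support, momentChar x v = κ) (g : Fin k → ZMod M) :
    expSum f (g + v) = κ * expSum f g := by
  rw [expSum_eq_sum, expSum_eq_sum, mul_sum]
  refine sum_congr rfl fun x hx => ?_
  rw [AddChar.map_add_eq_mul, hv x hx, Circle.coe_mul]
  ring

end MomentCurve

/-- The restriction of the coefficients `f` to the residue class of `r` modulo `N`. -/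
noncomputable def residuePart (f : ℤ →₀ ℂ) (N : ℕ) (r : ℤ) : ℤ →₀ ℂ :=
  f.filter (· ≡ r [ZMOD N])

theorem mem_support_residuePart {f : ℤ →₀ ℂ} {N : ℕ} {r x : ℤ} :
    x ∈ (residuePart f N r).support ↔ x ∈ f.support ∧ x ≡ r [ZMOD N] := by
  rw [residuePart, Finsupp.support_filter, mem_filter]

theorem residuePart_one (f : ℤ →₀ ℂ) (r : ℤ) : residuePart f 1 r = f :=
  Finsupp.filter_eq_self_iff _ _ |>.2 fun x _ => by
    rw [Nat.cast_one]; exact Int.modEq_one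

theorem add_mul_modEq_add_mul_iff {A B : ℕ} (hA : 0 < A) {r u y : ℤ} :
    r + A * u ≡ r + A * y [ZMOD (A * B : ℕ)] ↔ u ≡ y [ZMOD B] := by
  have hA' : (A : ℤ) ≠ 0 := by exact_mod_cast hA.ne'
  rw [Nat.cast_mul, ← Int.ModEq.mul_left_cancel_iff' (a := u) hA']
  exact ⟨Int.ModEq.add_left_cancel' r, Int.ModEq.add_left r⟩

theorem residuePart_eq_sum_range (f : ℤ →₀ ℂ) {A B : ℕ} (hA : 0 < A) (hB : 0 < B) (r : ℤ) :
    residuePart f A r = ∑ y ∈ range B, residuePart f (A * B) (r + A * y) := by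
  ext x
  simp only [residuePart, Finsupp.filter_apply, Finsupp.finsetSum_apply]
  split_ifs with hx
  · obtain ⟨u, rfl⟩ := Int.modEq_iff_add_fac.1 hx.symm
    obtain ⟨z, hzB, hzu⟩ := Int.existsUnique_equiv_nat u (by exact_mod_cast hB : (0 : ℤ) < B)
    simp only [add_mul_modEq_add_mul_iff hA]
    rw [sum_eq_single_of_mem z (mem_range.2 (by exact_mod_cast hzB)), if_pos hzu.symm]
    exact fun y hy hyz => if_neg fun huy => hyz <| Nat.ModEq.eq_of_lt_of_lt
      (Int.natCast_modEq_iff.1 (huy.symm.trans hzu.symm)) (mem_range.1 hy) (by exact_mod_cast hzB)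
  · refine (sum_eq_zero fun y _ => if_neg fun hxy => hx ?_).symm
    rw [Nat.cast_mul] at hxy
    exact (hxy.of_mul_right _).trans Int.modEq_add_fac_self

theorem residuePart_one_eq_sum_range (f : ℤ →₀ ℂ) {N : ℕ} (hN : 0 < N) :
    f = ∑ r ∈ range N, residuePart f N r := by
  simpa [residuePart_one] using residuePart_eq_sum_range f one_pos hN 0

theorem residuePart_residuePart_of_modEq {f : ℤ →₀ ℂ} {M N : ℕ} (hMN : M ∣ N) {r s : ℤ}
    (hrs : s ≡ r [ZMOD M]) : residuePart (residuePart f M r) N s = residuePart f N s := by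
  ext x
  simp only [residuePart, Finsupp.filter_apply]
  split_ifs with hN hM
  · rfl
  · exact absurd ((hN.of_dvd (by exact_mod_cast hMN)).trans hrs) hM
  · rfl

section Moments

variable {k M : ℕ} [NeZero M] {w : (Fin k → ZMod M) → ℝ}

/-- The `q`-th moment of the exponential sum of `f` against the weight `w`, unnormalized. -/
noncomputable def moment (w : (Fin k → ZMod M) → ℝ) (f : ℤ →₀ ℂ) (q : ℕ) : ℝ :=
  ∑ g, w g * ‖expSum f g‖ ^ q

/-- The sum of the `q`-th moments of the pieces of `f` in the residue classes modulo `N`. -/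
noncomputable def levelMoment (w : (Fin k → ZMod M) → ℝ) (f : ℤ →₀ ℂ) (q N : ℕ) : ℝ :=
  ∑ r ∈ range N, moment w (residuePart f N r) q

theorem moment_nonneg (hw : 0 ≤ w) (f : ℤ →₀ ℂ) (q : ℕ) : 0 ≤ moment w f q :=
  sum_nonneg fun g _ => mul_nonneg (hw g) (by positivity)

theorem levelMoment_nonneg (hw : 0 ≤ w) (f : ℤ →₀ ℂ) (q N : ℕ) : 0 ≤ levelMoment w f q N :=
  sum_nonneg fun _ _ => moment_nonneg hw _ q

theorem moment_zero {q : ℕ} (hq : q ≠ 0) : moment w 0 q = 0 :=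
  sum_eq_zero fun g _ => by rw [expSum, map_zero, norm_zero, zero_pow hq, mul_zero]

theorem levelMoment_one (f : ℤ →₀ ℂ) (q : ℕ) : levelMoment w f q 1 = moment w f q := by
  simp [levelMoment, residuePart_one]

theorem levelMoment_mul (f : ℤ →₀ ℂ) (q A B : ℕ) :
    levelMoment w f q (A * B) = ∑ ξ ∈ range A, ∑ y ∈ range B,
      moment w (residuePart f (A * B) ((ξ : ℤ) + A * y)) q := by
  rw [levelMoment, sum_range_mul A B fun z => moment w (residuePart f (A * B) z) q]
  push_cast
  rfl

theorem moment_sum_le (hw : 0 ≤ w) {ι : Type*} (s : Finset ι) (f : ι → ℤ →₀ ℂ) (q : ℕ) :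
    moment w (∑ i ∈ s, f i) (q + 1) ≤ (#s : ℝ) ^ q * ∑ i ∈ s, moment w (f i) (q + 1) := by
  simp only [moment]
  rw [sum_comm, mul_sum]
  refine sum_le_sum fun g _ => ?_
  rw [← mul_sum, mul_left_comm, expSum_sum]
  exact mul_le_mul_of_nonneg_left (norm_sum_pow_le_card_pow_mul_sum _ _ _) (hw g)

theorem levelMoment_le_levelMoment_mul (hw : 0 ≤ w) (f : ℤ →₀ ℂ) (q : ℕ) {A B : ℕ} (hA : 0 < A)
    (hB : 0 < B) :
    levelMoment w f (q + 1) A ≤ (B : ℝ) ^ q * levelMoment w f (q + 1) (A * B) := by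
  rw [levelMoment_mul, mul_sum]
  refine sum_le_sum fun ξ _ => ?_
  rw [residuePart_eq_sum_range f hA hB]
  simpa only [card_range] using moment_sum_le hw (range B) _ q

theorem levelMoment_residuePart_le (hw : 0 ≤ w) (f : ℤ →₀ ℂ) {q A N : ℕ} (hq : q ≠ 0)
    (hA : A ∣ N) (ξ : ℤ) : levelMoment w (residuePart f A ξ) q N ≤ levelMoment w f q N := by
  refine sum_le_sum fun r _ => ?_
  by_cases h : r ≡ ξ [ZMOD A]
  · rw [residuePart_residuePart_of_modEq hA h]
  · have hzero : residuePart (residuePart f A ξ) N r = 0 := by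
      refine Finsupp.support_eq_empty.1 (eq_empty_of_forall_notMem fun x hx => h ?_)
      obtain ⟨hxA, hxN⟩ := mem_support_residuePart.1 hx
      exact (hxN.of_dvd (by exact_mod_cast hA)).symm.trans (mem_support_residuePart.1 hxA).2
    rw [hzero, moment_zero hq]
    exact moment_nonneg hw _ q

end Moments

section Transfer

variable {k M : ℕ} [NeZero M] {w : (Fin k → ZMod M) → ℝ}

/-- The coefficients `f(x) ψ_x(g)`; modulating `f` translates its exponential sum. -/
noncomputable def modulate (f : ℤ →₀ ℂ) (g : Fin k → ZMod M) : ℤ →₀ ℂ :=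
  (fun x => (momentChar x g : ℂ)) • f

theorem expSum_modulate (f : ℤ →₀ ℂ) (g v : Fin k → ZMod M) :
    expSum (modulate f g) v = expSum f (g + v) := by
  rw [expSum_eq_sum f, expSum, Finsupp.linearCombination_apply,
    Finsupp.sum_of_support_subset _ (s := f.support) _ _ (by simp)]
  · refine sum_congr rfl fun x _ => ?_
    rw [modulate, Finsupp.coe_pointwise_smul, Pi.smul_apply', smul_eq_mul, smul_eq_mul,
      AddChar.map_add_eq_mul, Circle.coe_mul]
    ring
  · intro x hx
    contrapose! hx
    simp_all [modulate]

theorem residuePart_modulate (f : ℤ →₀ ℂ) (g : Fin k → ZMod M) (N : ℕ) (r : ℤ) :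
    residuePart (modulate f g) N r = modulate (residuePart f N r) g := by
  ext x
  simp [residuePart, modulate, Finsupp.filter_apply]

theorem injective_add_mul {A : ℕ} (hA : 0 < A) (ξ : ℤ) :
    Function.Injective fun u : ℤ => ξ + A * u := fun u v h => by
  simpa [hA.ne'] using h

/-- The coefficients `u ↦ f(ξ + A u)` along an arithmetic progression. -/
noncomputable def pullback (f : ℤ →₀ ℂ) {A : ℕ} (hA : 0 < A) (ξ : ℤ) : ℤ →₀ ℂ :=
  f.comapDomain (fun u => ξ + A * u) (injective_add_mul hA ξ).injOn

theorem residuePart_pullback (f : ℤ →₀ ℂ) {A : ℕ} (hA : 0 < A) (ξ : ℤ) (B : ℕ) (y : ℤ) :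
    residuePart (pullback f hA ξ) B y = pullback (residuePart f (A * B) (ξ + A * y)) hA ξ := by
  ext u
  simp only [residuePart, pullback, Finsupp.filter_apply, Finsupp.comapDomain_apply,
    add_mul_modEq_add_mul_iff hA]

theorem norm_expSum_pullback {l D : ℕ} [NeZero D] {f : ℤ →₀ ℂ} {A : ℕ} (hA : 0 < A) {ξ : ℤ}
    (hf : ∀ x ∈ f.support, x ≡ ξ [ZMOD A]) {v : Fin k → ZMod M} {κ : Circle}
    {h : Fin l → ZMod D} (hv : ∀ u : ℤ, momentChar (ξ + A * u) v = κ * momentChar u h) :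
    ‖expSum (pullback f hA ξ) h‖ = ‖expSum f v‖ := by
  have hinj := injective_add_mul hA ξ
  have hbij : Set.BijOn (fun u : ℤ => ξ + A * u)
      ((fun u : ℤ => ξ + A * u) ⁻¹' f.support) f.support := by
    refine ⟨fun u hu => hu, hinj.injOn, fun x hx => ?_⟩
    obtain ⟨u, rfl⟩ := Int.modEq_iff_add_fac.1 (hf x hx).symm
    exact ⟨u, hx, rfl⟩
  have : expSum f v = κ * expSum (pullback f hA ξ) h := by
    rw [expSum, expSum, Finsupp.linearCombination_apply, Finsupp.linearCombination_apply,
      ← Finsupp.sum_comapDomain _ f _ hbij, Finsupp.mul_sum]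
    refine Finsupp.sum_congr fun u _ => ?_
    simp only [Function.comp_apply, hv, Circle.coe_mul, smul_eq_mul]
    ring
  rw [this, norm_mul, Circle.norm_coe, one_mul]

/-- Translations of the dual group preserve the weight `w` and act on the progression `ξ + A ℤ`,
up to unimodular constants, as the characters of the moment curve of degree `l` modulo `D`. -/
def HasMomentShifts (w : (Fin k → ZMod M) → ℝ) (A : ℕ) (ξ : ℤ) (l D : ℕ) [NeZero D] : Prop :=
  ∀ h : Fin l → ZMod D, ∃ (v : Fin k → ZMod M) (κ : Circle),
    (∀ u : ℤ, momentChar (ξ + A * u) v = κ * momentChar u h) ∧ ∀ g, w (g + v) = w g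

theorem card_mul_moment_eq_sum_translates {H : Type*} [Fintype H] {σ : H → Fin k → ZMod M}
    (hσ : ∀ h g, w (g + σ h) = w g) (f : ℤ →₀ ℂ) (q : ℕ) :
    (Fintype.card H : ℝ) * moment w f q = ∑ g, w g * ∑ h, ‖expSum f (g + σ h)‖ ^ q := by
  have translate : ∀ h, ∑ g, w g * ‖expSum f (g + σ h)‖ ^ q = moment w f q := fun h => by
    rw [moment, ← Equiv.sum_comp (Equiv.addRight (σ h)) fun g => w g * ‖expSum f g‖ ^ q]
    simp only [Equiv.coe_addRight, hσ]
  simp_rw [mul_sum]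
  rw [sum_comm]
  simp only [translate, sum_const, card_univ, nsmul_eq_mul]

/-- The critical exponent `k(k+1)/2` of the moment curve of degree `k`. -/
noncomputable def crit (k : ℕ) : ℝ := k * (k + 1) / 2

/-- The critical moments of the pieces of `f` modulo `p ^ a`, for frequencies modulo
`p ^ (k n)`. -/
noncomputable def critMoment (p k n : ℕ) [NeZero p] (f : ℤ →₀ ℂ) (a : ℕ) : ℝ :=
  levelMoment (1 : (Fin k → ZMod (p ^ (k * n))) → ℝ) f (k * (k + 1)) (p ^ a)

/-- Decoupling of the moment curve of degree `k` into residue classes modulo `p ^ n`, with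
constant `K`. The factor `p ^ (n (k(k+1)/2 - 1))` is attained, up to a constant, by an indicator
function of `p ^ n` consecutive integers. -/
def Decouples (p k n : ℕ) [NeZero p] (K : ℝ) : Prop :=
  ∀ f, critMoment p k n f 0 ≤ K * (p : ℝ) ^ (n * (crit k - 1)) * critMoment p k n f n

theorem Decouples.moment_residuePart_le {p l d : ℕ} [NeZero p] {K : ℝ} (hdec : Decouples p l d K)
    (hw : 0 ≤ w) (f : ℤ →₀ ℂ) {A : ℕ} (hA : 0 < A) {ξ : ℤ}
    (hshift : HasMomentShifts w A ξ l (p ^ (l * d))) :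
    moment w (residuePart f A ξ) (l * (l + 1)) ≤ K * (p : ℝ) ^ (d * (crit l - 1)) *
      ∑ y ∈ range (p ^ d), moment w (residuePart f (A * p ^ d) (ξ + A * y)) (l * (l + 1)) := by
  choose σ κ hσ hinv using hshift
  set Φ := fun g : Fin k → ZMod M => pullback (modulate f g) hA ξ
  have pull : ∀ (B : ℕ) (y : ℤ) (g : Fin k → ZMod M) h,
      ‖expSum (residuePart f (A * B) (ξ + A * y)) (g + σ h)‖
      = ‖expSum (residuePart (Φ g) B y) h‖ := fun B y g h => by
    rw [residuePart_pullback, ← expSum_modulate, ← residuePart_modulate]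
    refine (norm_expSum_pullback hA (fun x hx => ?_) (hσ h)).symm
    have hx := (mem_support_residuePart.1 hx).2
    rw [Nat.cast_mul] at hx
    exact (hx.of_mul_right _).trans Int.modEq_add_fac_self
  have pull_one : ∀ (g : Fin k → ZMod M) h,
      ‖expSum (residuePart f A ξ) (g + σ h)‖ = ‖expSum (Φ g) h‖ := fun g h => by
    simpa [residuePart_one] using pull 1 0 g h
  have hcard : (0 : ℝ) < Fintype.card (Fin l → ZMod (p ^ (l * d))) := by
    exact_mod_cast Fintype.card_pos
  refine le_of_mul_le_mul_left ?_ hcard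
  rw [mul_left_comm, mul_sum (range _)]
  simp_rw [card_mul_moment_eq_sum_translates hinv, pull, pull_one]
  rw [sum_comm, mul_sum]
  refine sum_le_sum fun g _ => ?_
  rw [← mul_sum, mul_left_comm]
  refine mul_le_mul_of_nonneg_left ?_ (hw g)
  simpa [critMoment, levelMoment, moment, residuePart_one] using hdec (Φ g)

theorem Decouples.levelMoment_le {p l d : ℕ} [NeZero p] {K : ℝ} (hdec : Decouples p l d K)
    (hK : 0 ≤ K) (hl : 0 < l) (hw : 0 ≤ w) (f : ℤ →₀ ℂ) {A : ℕ} (hA : 0 < A)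
    (hshift : ∀ ξ : ℤ, residuePart f A ξ ≠ 0 → HasMomentShifts w A ξ l (p ^ (l * d))) :
    levelMoment w f (l * (l + 1)) A
      ≤ K * (p : ℝ) ^ (d * (crit l - 1)) * levelMoment w f (l * (l + 1)) (A * p ^ d) := by
  rw [levelMoment_mul, mul_sum]
  refine sum_le_sum fun ξ _ => ?_
  by_cases hξ : residuePart f A ξ = 0
  · rw [hξ, moment_zero (by positivity)]
    have := sum_nonneg fun y (_ : y ∈ range (p ^ d)) =>
      moment_nonneg hw (residuePart f (A * p ^ d) ((ξ : ℤ) + A * y)) (l * (l + 1))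
    positivity
  · exact_mod_cast hdec.moment_residuePart_le hw f hA (hshift ξ hξ)

end Transfer

section Taylor

variable {R : Type*} [CommRing R]

/-- The Taylor coefficients of orders `1, …, l` at `y` of the monomials of degrees
`m + 1, …, m + l`. -/
noncomputable def taylorMatrix (m l : ℕ) (y : R) : Matrix (Fin l) (Fin l) R :=
  fun i j => (taylor y (X ^ (m + 1 + j : ℕ))).coeff (i + 1)

theorem taylorMatrix_mulVec (m l : ℕ) (y : R) (v : Fin l → R) (i : Fin l) :
    (taylorMatrix m l y).mulVec v i
      = (taylor y (∑ j, C (v j) * X ^ (m + 1 + j : ℕ))).coeff (i + 1) := by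
  rw [map_sum, finsetSum_coeff, Matrix.mulVec, dotProduct]
  refine sum_congr rfl fun j _ => ?_
  rw [taylor_mul, taylor_C, coeff_C_mul, taylorMatrix, mul_comm]

theorem map_taylorMatrix {S : Type*} [CommRing S] (φ : R →+* S) (m l : ℕ) (y : R) :
    φ.mapMatrix (taylorMatrix m l y) = taylorMatrix m l (φ y) := by
  ext i j
  have := congrArg (fun P : S[X] => P.coeff (i + 1))
    (map_taylor (X ^ (m + 1 + j : ℕ) : R[X]) y φ)
  rwa [coeff_map, Polynomial.map_pow, map_X] at this

theorem coeff_sum_fin_C_mul_X_pow {l : ℕ} (v : Fin l → R) (j : Fin l) :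
    (∑ i, C (v i) * X ^ (i : ℕ)).coeff j = v j := by
  simp [finsetSum_coeff, Fin.val_inj]

theorem det_taylorMatrix_ne_zero {F : Type*} [Field F] {m l : ℕ} {y : F} (hy : y ≠ 0)
    (hm : ∀ j < l, ((m + 1 + j : ℕ) : F) ≠ 0) : (taylorMatrix m l y).det ≠ 0 := by
  intro hdet
  obtain ⟨v, hv, hmul⟩ := Matrix.exists_mulVec_eq_zero_iff.2 hdet
  set P : F[X] := ∑ j : Fin l, C (v j) * X ^ (m + 1 + j : ℕ)
  set r : F[X] := ∑ j : Fin l, C (v j * (m + 1 + j : ℕ)) * X ^ (j : ℕ) with hr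
  have hderiv : derivative P = X ^ m * r := by
    rw [derivative_sum, mul_sum]
    refine sum_congr rfl fun j _ => ?_
    rw [derivative_C_mul_X_pow, show m + 1 + (j : ℕ) - 1 = m + j by omega, pow_add]
    ring
  have hdvd : X ^ l ∣ taylor y (derivative P) := by
    have : taylor y (derivative P) = derivative (taylor y P) := by
      simp [taylor_apply, derivative_comp]
    rw [this, X_pow_dvd_iff]
    intro d hd
    have := congrFun hmul ⟨d, hd⟩
    rw [taylorMatrix_mulVec] at this
    rw [coeff_derivative, this, Pi.zero_apply, zero_mul]
  rw [hderiv, taylor_mul, taylor_X_pow] at hdvd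
  have hcop : IsCoprime (X ^ l) ((X + C y) ^ m) := by
    refine IsCoprime.pow ⟨-C y⁻¹, C y⁻¹, ?_⟩
    rw [mul_add, ← C_mul, inv_mul_cancel₀ hy, C_1]
    ring
  have hr0 : r = 0 := by
    rw [← taylor_eq_zero (r := y)]
    refine eq_zero_of_dvd_of_degree_lt (hcop.dvd_of_dvd_mul_left hdvd) ?_
    rw [degree_taylor, degree_X_pow, hr]
    exact degree_sum_fin_lt _
  refine hv (funext fun j => (mul_eq_zero.1 ?_).resolve_right (hm j j.isLt))
  rw [← coeff_sum_fin_C_mul_X_pow (fun i : Fin l => v i * (m + 1 + i : ℕ)), ← hr, hr0, coeff_zero]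

theorem isUnit_det_taylorMatrix {m l : ℕ} {y : R} (hy : IsUnit y)
    (hm : ∀ j < l, IsUnit ((m + 1 + j : ℕ) : R)) : IsUnit (taylorMatrix m l y).det := by
  by_contra hdet
  obtain ⟨I, hI, hmem⟩ := exists_max_ideal_of_mem_nonunits hdet
  let := Ideal.Quotient.field I
  refine det_taylorMatrix_ne_zero (F := R ⧸ I) (m := m) (l := l)
    (hy.map (Ideal.Quotient.mk I)).ne_zero (fun j hj => ?_) ?_
  · simpa using ((hm j hj).map (Ideal.Quotient.mk I)).ne_zero
  · rw [← map_taylorMatrix, ← RingHom.map_det, Ideal.Quotient.eq_zero_iff_mem]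
    exact hmem

theorem eval_add_eq_sum_coeff_taylor (Q : R[X]) {l : ℕ} (y : R) {z : R} (hz : z ^ (l + 1) = 0) :
    Q.eval (y + z)
      = (taylor y Q).coeff 0 + ∑ i : Fin l, (taylor y Q).coeff (i + 1) * z ^ (i + 1 : ℕ) := by
  rw [add_comm y z, ← taylor_eval,
    eval_eq_sum_range' (n := l + 1 + (taylor y Q).natDegree) (by omega), sum_range_add,
    sum_range_succ', sum_range, pow_zero, mul_one, add_comm (∑ i : Fin l, _)]
  refine add_eq_left.2 (sum_eq_zero fun d _ => ?_)
  rw [pow_add, hz, zero_mul, mul_zero]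

theorem exists_X_pow_dvd_eval_add_eq {m l : ℕ} {y : R} (hy : IsUnit y)
    (hm : ∀ j < l, IsUnit ((m + 1 + j : ℕ) : R)) (t : Fin l → R) :
    ∃ Q : R[X], Q.natDegree ≤ m + l ∧ X ^ (m + 1) ∣ Q ∧ ∃ c, ∀ z, z ^ (l + 1) = 0 →
      Q.eval (y + z) = c + ∑ i, t i * z ^ (i + 1 : ℕ) := by
  have hN := isUnit_det_taylorMatrix hy hm
  set v := (taylorMatrix m l y)⁻¹.mulVec t
  set Q : R[X] := ∑ j, C (v j) * X ^ (m + 1 + j : ℕ)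
  have hcoeff : ∀ i : Fin l, (taylor y Q).coeff (i + 1) = t i := fun i => by
    rw [← taylorMatrix_mulVec, Matrix.mulVec_mulVec, Matrix.mul_nonsing_inv _ hN, Matrix.one_mulVec]
  refine ⟨Q, ?_, ?_, (taylor y Q).coeff 0, fun z hz => ?_⟩
  · refine natDegree_sum_le_of_forall_le _ _ fun j _ => ?_
    exact (natDegree_C_mul_X_pow_le _ _).trans (by omega)
  · exact dvd_sum fun j _ => Dvd.dvd.mul_left (pow_dvd_pow _ (by omega)) _
  · rw [eval_add_eq_sum_coeff_taylor Q y hz]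
    simp only [hcoeff]

end Taylor

section Congruencing

variable {p k l n a b d : ℕ} {K : ℝ}

theorem toCircle_add_mul_sum_eq_mul_momentChar {D E : ℕ} [NeZero D] [NeZero (D * E)]
    (c : ZMod (D * E)) (h : Fin l → ZMod D) (u : ℤ) :
    ZMod.toCircle (c + (E : ZMod (D * E)) *
        ∑ j, ((h j).val : ZMod (D * E)) * (u : ZMod (D * E)) ^ (j + 1 : ℕ))
      = ZMod.toCircle c * momentChar u h := by
  have := toCircle_mul_intCast D E (∑ j, (h j).val * u ^ (j + 1 : ℕ))
  push_cast at this
  rw [AddChar.map_add_eq_mul, this, momentChar_apply]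
  simp

theorem pow_mul_pow_eq_pow_mul_pow {S : Type*} [CommMonoid S] (x u : S) {i : ℕ} (hi : i ≤ l) :
    x ^ ((l - i) * a) * (x ^ a * u) ^ i = x ^ (l * a) * u ^ i := by
  obtain ⟨e, rfl⟩ := Nat.exists_eq_add_of_le hi
  rw [Nat.add_sub_cancel_left, mul_pow, ← mul_assoc, ← pow_mul, ← pow_add]
  ring_nf

theorem hasMomentShifts_one [NeZero p] (a d : ℕ) (ξ : ℤ) :
    HasMomentShifts (1 : (Fin k → ZMod (p ^ (k * (a + d)))) → ℝ) (p ^ a) ξ k (p ^ (k * d)) := by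
  set D := p ^ (k * d)
  intro h
  have : NeZero (D * p ^ (k * a)) := ⟨by simp [D, NeZero.ne p]⟩
  have hM : D * p ^ (k * a) ∣ p ^ (k * (a + d)) := by rw [← pow_add, mul_add, add_comm]
  set P : (ZMod (D * p ^ (k * a)))[X] :=
    ∑ j : Fin k, C ((p : ZMod (D * p ^ (k * a))) ^ ((k - (j + 1 : ℕ)) * a) * (h j).val) *
      (X - C (ξ : ZMod (D * p ^ (k * a)))) ^ (j + 1 : ℕ) with hP
  have hdeg : P.natDegree ≤ k := natDegree_sum_le_of_forall_le _ _ fun j _ =>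
    (natDegree_C_mul_le _ _).trans <| (natDegree_pow_le_of_le _ (natDegree_X_sub_C_le _)).trans
      (by omega)
  obtain ⟨v, κ, hv⟩ := exists_momentChar_eq_eval hM hdeg
  refine ⟨v, κ, fun u => ?_, fun _ => rfl⟩
  rw [hv, ← one_mul (momentChar u h),
    ← AddChar.map_zero_eq_one (ZMod.toCircle (N := D * p ^ (k * a))),
    ← toCircle_add_mul_sum_eq_mul_momentChar, zero_add, mul_sum, hP, eval_finsetSum]
  congr 2
  refine sum_congr rfl fun j _ => ?_
  simp only [eval_mul, eval_C, eval_pow, eval_sub, eval_X]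
  push_cast
  rw [add_sub_cancel_left, mul_right_comm, pow_mul_pow_eq_pow_mul_pow (i := j + 1) _ _ j.isLt]
  ring

theorem Decouples.critMoment_le [NeZero p] (hdec : Decouples p k d K) (hK : 0 ≤ K) (hk : 0 < k)
    (hn : a + d = n) (f : ℤ →₀ ℂ) :
    critMoment p k n f a ≤ K * (p : ℝ) ^ (d * (crit k - 1)) * critMoment p k n f n := by
  subst hn
  rw [critMoment, critMoment, pow_add p a d]
  exact hdec.levelMoment_le hK hk zero_le_one f (pow_pos (NeZero.pos p) _) fun ξ _ =>
    hasMomentShifts_one a d ξ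

/-- The coefficients `f` and `g` are supported over disjoint sets of residue classes modulo `p`. -/
def Transverse (p : ℕ) (f g : ℤ →₀ ℂ) : Prop :=
  ∀ x ∈ f.support, ∀ y ∈ g.support, ¬ x ≡ y [ZMOD p]

theorem Transverse.symm {f g : ℤ →₀ ℂ} (h : Transverse p f g) : Transverse p g f :=
  fun x hx y hy hxy => h y hy x hx hxy.symm

theorem Transverse.not_modEq {f g : ℤ →₀ ℂ} (h : Transverse p f g) (ha : a ≠ 0) (hb : b ≠ 0)
    {ξ η : ℤ} (hξ : residuePart f (p ^ a) ξ ≠ 0) (hη : residuePart g (p ^ b) η ≠ 0) :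
    ¬ ξ ≡ η [ZMOD p] := by
  intro hξη
  obtain ⟨x, hx⟩ := Finsupp.support_nonempty_iff.2 hξ
  obtain ⟨y, hy⟩ := Finsupp.support_nonempty_iff.2 hη
  rw [mem_support_residuePart] at hx hy
  refine h x hx.1 y hy.1 (((hx.2.of_dvd ?_).trans hξη).trans (hy.2.of_dvd ?_).symm) <;>
    exact_mod_cast dvd_pow_self p ‹_›

theorem isUnit_intCast_of_not_dvd [Fact p.Prime] {M e : ℕ} (hM : M ∣ p ^ e) {x : ℤ}
    (hx : ¬ (p : ℤ) ∣ x) : IsUnit (x : ZMod M) := by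
  rw [ZMod.coe_int_isUnit_iff_isCoprime]
  have hp := Nat.prime_iff_prime_int.1 (Fact.out : p.Prime)
  exact (hp.coprime_iff_not_dvd.2 hx).pow_left.of_isCoprime_of_dvd_left (by exact_mod_cast hM)

theorem exists_X_sub_C_pow_dvd_toCircle_eval_eq [Fact p.Prime] (hlk : l ≤ k) (hkp : k < p)
    (hda : l * d ≤ a) {ξ η : ℤ} (hξη : ¬ ξ ≡ η [ZMOD p])
    (h : Fin l → ZMod (p ^ (l * d))) :
    ∃ Q : (ZMod (p ^ (l * d) * p ^ (l * a)))[X], Q.natDegree ≤ k ∧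
      (X - C (η : ZMod (p ^ (l * d) * p ^ (l * a)))) ^ (k - l + 1) ∣ Q ∧
      ∃ c : Circle, ∀ u : ℤ, ZMod.toCircle
        (Q.eval ((ξ + (p ^ a : ℕ) * u : ℤ) : ZMod (p ^ (l * d) * p ^ (l * a))))
          = c * momentChar u h := by
  set M := p ^ (l * d) * p ^ (l * a) with hMdef
  have hMpow : M = p ^ (l * (a + d)) := by rw [hMdef, ← pow_add, mul_add, add_comm]
  have hunit : ∀ x : ℤ, ¬ (p : ℤ) ∣ x → IsUnit (x : ZMod M) := fun _ =>
    isUnit_intCast_of_not_dvd hMpow.dvd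
  have hzero : (p : ZMod M) ^ (a * (l + 1)) = 0 := by
    exact_mod_cast (ZMod.natCast_eq_zero_iff _ _).2
      (hMpow.dvd.trans (pow_dvd_pow p (by nlinarith : _ ≤ a * (l + 1))))
  obtain ⟨Q, hQ, hdvd, c, hc⟩ := exists_X_pow_dvd_eval_add_eq (m := k - l)
    (hunit (ξ - η) fun hd => hξη (Int.modEq_iff_dvd.2 (by simpa using hd.neg_right)))
    (fun j hj => by
      exact_mod_cast hunit (k - l + 1 + j : ℕ) fun hd =>
        absurd (Nat.le_of_dvd (by omega) (Int.natCast_dvd_natCast.1 hd)) (by omega))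
    fun i : Fin l => (p : ZMod M) ^ ((l - (i + 1 : ℕ)) * a) * (h i).val
  refine ⟨Q.comp (X - C (η : ZMod M)), ?_, ?_, ZMod.toCircle c, fun u => ?_⟩
  · exact natDegree_comp_le.trans
      ((Nat.mul_le_mul hQ (natDegree_X_sub_C_le _)).trans (by omega))
  · obtain ⟨S, rfl⟩ := hdvd
    exact ⟨S.comp (X - C (η : ZMod M)), by rw [mul_comp, X_pow_comp]⟩
  · have harg : ((ξ + (p ^ a : ℕ) * u : ℤ) : ZMod M) - η
        = ((ξ - η : ℤ) : ZMod M) + p ^ a * u := by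
      push_cast
      ring
    have hsum : ∑ j : Fin l, (p : ZMod M) ^ ((l - (j + 1 : ℕ)) * a) * (h j).val
          * (p ^ a * u) ^ (j + 1 : ℕ)
        = (p ^ (l * a) : ℕ) * ∑ j : Fin l, ((h j).val : ZMod M) * (u : ZMod M) ^ (j + 1 : ℕ) := by
      rw [mul_sum]
      refine sum_congr rfl fun j _ => ?_
      rw [mul_right_comm, pow_mul_pow_eq_pow_mul_pow (i := j + 1) _ _ j.isLt]
      push_cast
      ring
    rw [← toCircle_add_mul_sum_eq_mul_momentChar, eval_comp, eval_sub, eval_X, eval_C, harg,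
      hc _ (by rw [mul_pow, ← pow_mul, hzero, zero_mul]), hsum]

theorem hasMomentShifts_norm_expSum_residuePart [Fact p.Prime] (hl : 0 < l) (hlk : l ≤ k)
    (hkp : k < p) (hbn : b ≤ n) (hda : l * d ≤ a) (hab : l * (a + d) ≤ (k - l + 1) * b) {ξ η : ℤ}
    (hξη : ¬ ξ ≡ η [ZMOD p]) (f : ℤ →₀ ℂ) (e : ℕ) :
    HasMomentShifts (fun g : Fin k → ZMod (p ^ (k * n)) =>
      ‖expSum (residuePart f (p ^ b) η) g‖ ^ e) (p ^ a) ξ l (p ^ (l * d)) := by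
  have hdvd : p ^ (l * d) * p ^ (l * a) ∣ p ^ (b * (k - l + 1)) := by
    rw [← pow_add]
    exact pow_dvd_pow p (by linarith)
  have hM : p ^ (b * (k - l + 1)) ∣ p ^ (k * n) :=
    pow_dvd_pow p ((mul_comm b _).trans_le (Nat.mul_le_mul (by omega) hbn))
  intro h
  obtain ⟨Q, hQ, ⟨S, hS⟩, c, hc⟩ :=
    exists_X_sub_C_pow_dvd_toCircle_eval_eq hlk hkp hda hξη h
  obtain ⟨v, κ, hv⟩ := exists_momentChar_eq_eval (hdvd.trans hM) hQ
  refine ⟨v, κ * c, fun u => by rw [hv, hc, mul_assoc], fun g => ?_⟩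
  have hconst : ∀ x ∈ (residuePart f (p ^ b) η).support, momentChar x v = κ := fun x hx => by
    obtain ⟨t, rfl⟩ := Int.modEq_iff_add_fac.1 (mem_support_residuePart.1 hx).2.symm
    have hzero : (p : ZMod (p ^ (l * d) * p ^ (l * a))) ^ (b * (k - l + 1)) = 0 := by
      exact_mod_cast (ZMod.natCast_eq_zero_iff _ _).2 hdvd
    rw [hv, hS]
    simp only [eval_sub, eval_X, eval_C, eval_mul, eval_pow]
    push_cast
    rw [add_sub_cancel_left, mul_pow, ← pow_mul, hzero, zero_mul, zero_mul,
      AddChar.map_zero_eq_one, mul_one]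
  beta_reduce
  rw [expSum_add_of_momentChar_eq hconst, norm_mul, Circle.norm_coe, one_mul]

theorem Decouples.levelMoment_norm_expSum_le [Fact p.Prime] (hdec : Decouples p l d K)
    (hK : 0 ≤ K) (hl : 0 < l) (hlk : l ≤ k) (hkp : k < p) (hbn : b ≤ n) (ha : 0 < a)
    (hda : l * d ≤ a) (hab : l * (a + d) ≤ (k - l + 1) * b) {f g : ℤ →₀ ℂ}
    (hfg : Transverse p f g) (η : ℤ) {e : ℕ} (he : e ≠ 0) :
    levelMoment (fun v : Fin k → ZMod (p ^ (k * n)) => ‖expSum (residuePart g (p ^ b) η) v‖ ^ e)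
        f (l * (l + 1)) (p ^ a)
      ≤ K * (p : ℝ) ^ (d * (crit l - 1)) *
        levelMoment (fun v : Fin k → ZMod (p ^ (k * n)) =>
          ‖expSum (residuePart g (p ^ b) η) v‖ ^ e) f (l * (l + 1)) (p ^ (a + d)) := by
  by_cases hη : residuePart g (p ^ b) η = 0
  · simp [hη, expSum, levelMoment, moment, he]
  have hb : b ≠ 0 := by
    rintro rfl
    have : 0 < l * (a + d) := by positivity
    omega
  rw [pow_add p a d]
  exact hdec.levelMoment_le hK hl (fun _ => by positivity) f (pow_pos (NeZero.pos p) _)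
    fun ξ hξ => hasMomentShifts_norm_expSum_residuePart hl hlk hkp hbn hda hab
      (hfg.not_modEq ha.ne' hb hξ hη) g e

end Congruencing

section ScaleIteration

variable {F : ℕ → ℝ} {l A d₀ : ℕ} {C₀ Q δ R : ℝ}

theorem le_of_scale_step_of_le (hF : 0 ≤ F) (hl : 0 < l) (hd₀ : 0 < d₀) (hC₀ : 0 ≤ C₀)
    (hQ : 0 ≤ Q) (hδ : 1 ≤ δ) (hCδ : C₀ ≤ δ ^ d₀)
    (hstep : ∀ a d, 0 < a → l * d ≤ a → a + d ≤ A → F a ≤ C₀ * Q ^ d * F (a + d)) (d : ℕ) :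
    ∀ a, l * d₀ ≤ a → a + d ≤ A → F a ≤ C₀ * (δ * Q) ^ d * F (a + d) := by
  induction d using Nat.strong_induction_on with
  | _ d ih =>
    intro a ha hA
    have ha0 : 0 < a := (Nat.mul_pos hl hd₀).trans_le ha
    rcases le_or_gt (l * d) a with h | h
    · refine (hstep a d ha0 h hA).trans (mul_le_mul_of_nonneg_right ?_ (hF _))
      gcongr
      exact le_mul_of_one_le_left hQ hδ
    · have hlt : a / l < d := (Nat.div_lt_iff_lt_mul hl).2 (by rwa [mul_comm])
      have hle : d₀ ≤ a / l := (Nat.le_div_iff_mul_le hl).2 (by rwa [mul_comm])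
      have hmul : l * (a / l) ≤ a := Nat.mul_div_le a l
      obtain ⟨e, rfl⟩ := Nat.exists_eq_add_of_lt hlt
      set d₁ := a / l
      have hrec := ih (e + 1) (by omega) (a + d₁) (by omega) (by omega)
      calc F a ≤ C₀ * Q ^ d₁ * F (a + d₁) := hstep a d₁ ha0 hmul (by omega)
        _ ≤ δ ^ d₁ * Q ^ d₁ * (C₀ * (δ * Q) ^ (e + 1) * F (a + d₁ + (e + 1))) := by
          have := hF (a + d₁)
          gcongr
          exact hCδ.trans (pow_le_pow_right₀ hδ hle)
        _ = C₀ * (δ * Q) ^ (d₁ + e + 1) * F (a + (d₁ + e + 1)) := by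
          rw [show a + d₁ + (e + 1) = a + (d₁ + e + 1) by ring]
          ring

theorem exists_forall_le_of_scale_step (hl : 0 < l) (hC₀ : 1 ≤ C₀) (hQ : 1 ≤ Q) (hδ : 1 < δ)
    (hR : 1 ≤ R) :
    ∃ C, 1 ≤ C ∧ ∀ (F : ℕ → ℝ) (A : ℕ), 0 ≤ F →
      (∀ a d, 0 < a → l * d ≤ a → a + d ≤ A → F a ≤ C₀ * Q ^ d * F (a + d)) →
      (∀ a d, F a ≤ R ^ d * F (a + d)) →
      ∀ a d, a + d ≤ A → F a ≤ C * (δ * Q) ^ d * F (a + d) := by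
  obtain ⟨d₀, hd₀⟩ := pow_unbounded_of_one_lt C₀ hδ
  have hd₀pos : 0 < d₀ := Nat.pos_of_ne_zero fun h => by
    rw [h, pow_zero] at hd₀
    linarith
  set c := l * d₀
  refine ⟨R ^ c * C₀, one_le_mul_of_one_le_of_one_le (one_le_pow₀ hR) hC₀,
    fun F A hF hstep htriv a d hA => ?_⟩
  have hδQ : 1 ≤ δ * Q := one_le_mul_of_one_le_of_one_le hδ.le hQ
  rcases le_or_gt d c with h | h
  · refine (htriv a d).trans (mul_le_mul_of_nonneg_right ?_ (hF _))
    calc R ^ d ≤ R ^ c := pow_le_pow_right₀ hR h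
      _ ≤ R ^ c * (C₀ * (δ * Q) ^ d) := le_mul_of_one_le_right (by positivity)
          (one_le_mul_of_one_le_of_one_le hC₀ (one_le_pow₀ hδQ))
      _ = R ^ c * C₀ * (δ * Q) ^ d := (mul_assoc _ _ _).symm
  · obtain ⟨d₁, rfl⟩ := Nat.exists_eq_add_of_le h.le
    have hlarge := le_of_scale_step_of_le hF hl hd₀pos (by linarith) (by linarith) hδ.le hd₀.le
      hstep d₁ (a + c) (by omega) (by omega)
    rw [add_assoc] at hlarge
    have hFnonneg := hF (a + (c + d₁))
    calc F a ≤ R ^ c * F (a + c) := htriv a c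
      _ ≤ R ^ c * (C₀ * (δ * Q) ^ d₁ * F (a + (c + d₁))) := by gcongr
      _ = R ^ c * C₀ * (δ * Q) ^ d₁ * F (a + (c + d₁)) := by ring
      _ ≤ R ^ c * C₀ * (δ * Q) ^ (c + d₁) * F (a + (c + d₁)) := by
        have : (δ * Q) ^ d₁ ≤ (δ * Q) ^ (c + d₁) := pow_le_pow_right₀ hδQ (by omega)
        gcongr

end ScaleIteration

section MixedMoments

variable (k M : ℕ) [NeZero M]

/-- The mixed moments of total degree `k(k+1)`, and of degree `l(l+1)` in the first sum, of the
pieces of `f` modulo `A` and of `g` modulo `B`. -/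
noncomputable def mixedMoment (f g : ℤ →₀ ℂ) (l A B : ℕ) : ℝ :=
  ∑ η ∈ range B, levelMoment (fun v : Fin k → ZMod M =>
    ‖expSum (residuePart g B η) v‖ ^ (k * (k + 1) - l * (l + 1))) f (l * (l + 1)) A

variable {k M}

theorem mixedMoment_nonneg (f g : ℤ →₀ ℂ) (l A B : ℕ) : 0 ≤ mixedMoment k M f g l A B :=
  sum_nonneg fun _ _ => levelMoment_nonneg (fun _ => by positivity) _ _ _

theorem mixedMoment_eq_sum_product (f g : ℤ →₀ ℂ) (l A B : ℕ) :
    mixedMoment k M f g l A B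
      = ∑ z ∈ range B ×ˢ range A ×ˢ (univ : Finset (Fin k → ZMod M)),
        ‖expSum (residuePart g B z.1) z.2.2‖ ^ (k * (k + 1) - l * (l + 1))
          * ‖expSum (residuePart f A z.2.1) z.2.2‖ ^ (l * (l + 1)) := by
  simp only [mixedMoment, levelMoment, moment, sum_product]

theorem mixedMoment_eq_sum_levelMoment (f g : ℤ →₀ ℂ) (l A B : ℕ) :
    mixedMoment k M f g l A B
      = ∑ ξ ∈ range A, levelMoment (fun v : Fin k → ZMod M =>
        ‖expSum (residuePart f A ξ) v‖ ^ (l * (l + 1))) g (k * (k + 1) - l * (l + 1)) B := by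
  simp only [mixedMoment, levelMoment, moment]
  rw [sum_comm]
  simp only [mul_comm]

theorem mixedMoment_zero (f g : ℤ →₀ ℂ) (A B : ℕ) :
    mixedMoment k M f g 0 A B = A * levelMoment (1 : (Fin k → ZMod M) → ℝ) g (k * (k + 1)) B := by
  rw [mixedMoment_eq_sum_levelMoment]
  simp [levelMoment, moment]

theorem mixedMoment_pow_le (f g : ℤ →₀ ℂ) {l m : ℕ} (A B : ℕ) (hk : l + 1 + m = k) :
    mixedMoment k M f g (l + 1) A B ^ (m + 1)
      ≤ mixedMoment k M g f m B A * mixedMoment k M f g l A B ^ m := by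
  have hswap : mixedMoment k M g f m B A
      = ∑ z ∈ range B ×ˢ range A ×ˢ (univ : Finset (Fin k → ZMod M)),
        ‖expSum (residuePart g B z.1) z.2.2‖ ^ (m * (m + 1))
          * ‖expSum (residuePart f A z.2.1) z.2.2‖ ^ (k * (k + 1) - m * (m + 1)) := by
    rw [mixedMoment_eq_sum_levelMoment]
    simp only [levelMoment, moment, sum_product]
  rw [hswap, mixedMoment_eq_sum_product, mixedMoment_eq_sum_product]
  refine sum_pow_le_sum_mul_sum_pow_of_pow_eq_mul_pow (fun _ _ => by positivity)
    (fun _ _ => by positivity) (fun _ _ => by positivity) fun z _ => ?_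
  have e₁ : k * (k + 1) - (l + 1) * (l + 1 + 1) = m * (m + 2 * l + 3) := by
    rw [← hk, Nat.sub_eq_iff_eq_add (by nlinarith)]
    ring
  have e₂ : k * (k + 1) - l * (l + 1) = (m + 1) * (m + 2 * l + 2) := by
    rw [← hk, Nat.sub_eq_iff_eq_add (by nlinarith)]
    ring
  have e₃ : k * (k + 1) - m * (m + 1) = (l + 1) * (l + 2 + 2 * m) := by
    rw [← hk, Nat.sub_eq_iff_eq_add (by nlinarith)]
    ring
  rw [e₁, e₂, e₃]
  ring

theorem mixedMoment_le_mixedMoment_mul (f g : ℤ →₀ ℂ) {l A B B' : ℕ} (hlk : l < k)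
    (hB : 0 < B) (hB' : 0 < B') :
    mixedMoment k M f g l A B ≤ (B' : ℝ) ^ (k * (k + 1)) * mixedMoment k M f g l A (B * B') := by
  have hB1 : (1 : ℝ) ≤ B' := by exact_mod_cast hB'
  obtain ⟨q, hq⟩ : ∃ q, k * (k + 1) - l * (l + 1) = q + 1 :=
    Nat.exists_eq_succ_of_ne_zero (Nat.sub_ne_zero_of_lt (by nlinarith))
  have hqk : q ≤ k * (k + 1) := by omega
  rw [mixedMoment_eq_sum_levelMoment, mixedMoment_eq_sum_levelMoment, mul_sum, hq]
  refine sum_le_sum fun ξ _ =>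
    (levelMoment_le_levelMoment_mul (fun _ => by positivity) g q hB hB').trans ?_
  exact mul_le_mul_of_nonneg_right (pow_le_pow_right₀ hB1 hqk)
    (levelMoment_nonneg (fun _ => by positivity) _ _ _)

theorem pow_mul_pow_le_pow_add_pow {x y : ℝ} (hx : 0 ≤ x) (hy : 0 ≤ y) {i q : ℕ} (h : i ≤ q) :
    x ^ (q - i) * y ^ i ≤ x ^ q + y ^ q := by
  calc x ^ (q - i) * y ^ i ≤ max x y ^ (q - i) * max x y ^ i := by
        gcongr
        exacts [le_max_left x y, le_max_right x y]
    _ = max x y ^ q := by rw [← pow_add, Nat.sub_add_cancel h]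
    _ ≤ x ^ q + y ^ q := by
        rcases max_choice x y with h | h <;> rw [h]
        exacts [le_add_of_nonneg_right (by positivity), le_add_of_nonneg_left (by positivity)]

theorem mixedMoment_le_add (f g : ℤ →₀ ℂ) {l : ℕ} (hl : l ≤ k) (A B : ℕ) :
    mixedMoment k M f g l A B ≤ A * levelMoment (1 : (Fin k → ZMod M) → ℝ) g (k * (k + 1)) B
      + B * levelMoment (1 : (Fin k → ZMod M) → ℝ) f (k * (k + 1)) A := by
  have hle : l * (l + 1) ≤ k * (k + 1) := by gcongr
  calc mixedMoment k M f g l A B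
      ≤ ∑ η ∈ range B, ∑ ξ ∈ range A, ∑ v : Fin k → ZMod M,
        (‖expSum (residuePart g B η) v‖ ^ (k * (k + 1))
          + ‖expSum (residuePart f A ξ) v‖ ^ (k * (k + 1))) :=
        sum_le_sum fun η _ => sum_le_sum fun ξ _ => sum_le_sum fun v _ =>
          pow_mul_pow_le_pow_add_pow (norm_nonneg _) (norm_nonneg _) hle
    _ = _ := by
        simp only [levelMoment, moment, Pi.one_apply, one_mul, sum_add_distrib, sum_const,
          card_range, nsmul_eq_mul, mul_sum]

end MixedMoments

theorem one_le_crit {l : ℕ} (hl : 0 < l) : 1 ≤ crit l := by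
  have : (1 : ℝ) ≤ l := by exact_mod_cast hl
  rw [crit]
  nlinarith

theorem crit_mono {l k : ℕ} (h : l ≤ k) : crit l ≤ crit k := by
  have : (l : ℝ) ≤ k := by exact_mod_cast h
  simp only [crit]
  gcongr

/-- Decoupling of the moment curve of degree `k` at every scale `p ^ n`, with a loss of at most a
constant times `p ^ (η n)`. -/
def HasDecouplingExponent (p k : ℕ) [NeZero p] (η : ℝ) : Prop :=
  ∃ C : ℝ, 1 ≤ C ∧ ∀ n, Decouples p k n (C * (p : ℝ) ^ (η * n))

/-- Decoupling of the moment curve of degree `k` up to `ε`-losses. -/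
def DecouplesEps (p k : ℕ) [NeZero p] : Prop :=
  ∀ ε : ℝ, 0 < ε → HasDecouplingExponent p k ε

theorem critMoment_nonneg (p k n : ℕ) [NeZero p] (f : ℤ →₀ ℂ) (a : ℕ) :
    0 ≤ critMoment p k n f a :=
  levelMoment_nonneg zero_le_one _ _ _

theorem DecouplesEps.mixedMoment_le {p k l : ℕ} [Fact p.Prime] (hdec : DecouplesEps p l)
    (hl : 0 < l) (hlk : l < k) (hkp : k < p) {ε : ℝ} (hε : 0 < ε) :
    ∃ C : ℝ, 1 ≤ C ∧ ∀ (n a b d : ℕ) (f g : ℤ →₀ ℂ), b ≤ n → l * (a + d) ≤ (k - l + 1) * b →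
      Transverse p f g → mixedMoment k (p ^ (k * n)) f g l (p ^ a) (p ^ b)
        ≤ C * (p : ℝ) ^ ((crit l - 1 + ε) * d)
          * mixedMoment k (p ^ (k * n)) f g l (p ^ (a + d)) (p ^ b) := by
  have hp1 : (1 : ℝ) < p := by exact_mod_cast (Fact.out : p.Prime).one_lt
  have hp0 : (0 : ℝ) < p := by linarith
  have hcrit := one_le_crit hl
  obtain ⟨C₀, hC₀, hdec₀⟩ := hdec (ε / 2) (half_pos hε)
  obtain ⟨q, hq⟩ := Nat.exists_eq_succ_of_ne_zero (by positivity : l * (l + 1) ≠ 0)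
  have hlt : l * (l + 1) < k * (k + 1) := by nlinarith
  obtain ⟨C, hC, hscale⟩ := exists_forall_le_of_scale_step (R := (p : ℝ) ^ q)
    (Q := (p : ℝ) ^ (ε / 2 + (crit l - 1))) hl hC₀
    (Real.one_le_rpow hp1.le (by linarith)) (Real.one_lt_rpow hp1 (half_pos hε))
    (one_le_pow₀ hp1.le)
  refine ⟨C, hC, fun n a b d f g hbn hab hfg => ?_⟩
  rw [mixedMoment, mixedMoment, mul_sum]
  refine sum_le_sum fun η _ => ?_
  have hQ : ∀ d : ℕ, ((p : ℝ) ^ (ε / 2 + (crit l - 1))) ^ d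
      = (p : ℝ) ^ (ε / 2 * d) * (p : ℝ) ^ (d * (crit l - 1)) := fun d => by
    rw [← Real.rpow_mul_natCast hp0.le, ← Real.rpow_add hp0]
    congr 1
    ring
  have hδQ : (p : ℝ) ^ ((crit l - 1 + ε) * d)
      = ((p : ℝ) ^ (ε / 2) * (p : ℝ) ^ (ε / 2 + (crit l - 1))) ^ d := by
    rw [← Real.rpow_add hp0, ← Real.rpow_mul_natCast hp0.le]
    congr 1
    ring
  rw [hδQ]
  refine hscale (fun a => levelMoment (fun v : Fin k → ZMod (p ^ (k * n)) =>
      ‖expSum (residuePart g (p ^ b) η) v‖ ^ (k * (k + 1) - l * (l + 1))) f (l * (l + 1)) (p ^ a))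
    (a + d) (fun a => levelMoment_nonneg (fun _ => by positivity) _ _ _)
    (fun a₁ d₁ ha₁ hd₁ hA => ?_) (fun a₁ d₁ => ?_) a d le_rfl
  · rw [hQ, ← mul_assoc]
    exact (hdec₀ d₁).levelMoment_norm_expSum_le (by positivity) hl hlk.le hkp hbn ha₁ hd₁
      ((Nat.mul_le_mul_left l hA).trans hab) hfg η (by omega)
  · rw [hq, pow_add p, pow_right_comm, ← Nat.cast_pow]
    exact levelMoment_le_levelMoment_mul (fun _ => by positivity) f q
      (pow_pos (NeZero.pos p) a₁) (pow_pos (NeZero.pos p) d₁)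

theorem critMoment_le_of_decouples {p k : ℕ} [NeZero p] (hk : 0 < k) {C η : ℝ} (hC : 0 ≤ C)
    (hdec : ∀ n, Decouples p k n (C * (p : ℝ) ^ (η * n))) {n a : ℕ} (han : a ≤ n) (f : ℤ →₀ ℂ) :
    critMoment p k n f a
      ≤ C * (p : ℝ) ^ (((n : ℝ) - a) * (crit k - 1 + η)) * critMoment p k n f n := by
  have hp0 : (0 : ℝ) < p := by exact_mod_cast NeZero.pos p
  obtain ⟨d, rfl⟩ := Nat.exists_eq_add_of_le han
  convert (hdec d).critMoment_le (by positivity) hk rfl f (a := a) using 2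
  rw [mul_assoc, ← Real.rpow_add hp0]
  push_cast
  ring_nf

theorem pow_mul_critMoment_le_of_decouples {p k : ℕ} [NeZero p] (hk : 0 < k) {C η : ℝ}
    (hC : 0 ≤ C) (hdec : ∀ n, Decouples p k n (C * (p : ℝ) ^ (η * n))) {n a : ℕ} (han : a ≤ n)
    (c : ℕ) (f : ℤ →₀ ℂ) :
    (p ^ c : ℕ) * critMoment p k n f a
      ≤ C * (p : ℝ) ^ (c + ((n : ℝ) - a) * (crit k - 1 + η)) * critMoment p k n f n := by
  have hp0 : (0 : ℝ) < p := by exact_mod_cast NeZero.pos p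
  rw [Real.rpow_add hp0, Real.rpow_natCast, ← Nat.cast_pow, mul_left_comm C, mul_assoc]
  exact mul_le_mul_of_nonneg_left (critMoment_le_of_decouples hk hC hdec han f) (by positivity)

/-- The exponent governing the size of the mixed moments. -/
noncomputable def mixedExponent (k l a b : ℕ) : ℝ :=
  a * (1 - crit l) + b * (1 - crit k + crit l)

theorem mixedExponent_interpolate {k l m : ℕ} (hk : l + 1 + m = k) (a b : ℕ) :
    mixedExponent k m b a + m * mixedExponent k l a b = (m + 1) * mixedExponent k (l + 1) a b := by
  subst hk
  simp only [mixedExponent, crit]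
  push_cast
  ring

section Gain

variable {p k : ℕ} {η : ℝ} {L l : ℕ}

/-- The bound for mixed moments expected from decoupling with exponent `η`, improved by a factor
`p ^ (γ b)`; the scales `b` are restricted to multiples of `L` with `L b ≤ n`. -/
def GainAt (p k : ℕ) [NeZero p] (η : ℝ) (L l : ℕ) (γ : ℝ) : Prop :=
  ∀ ε : ℝ, 0 < ε → ∃ C : ℝ, 1 ≤ C ∧ ∀ (n a b : ℕ) (f g : ℤ →₀ ℂ),
    l * a ≤ (k - l + 1) * b → L ∣ b → L * b ≤ n → Transverse p f g →
    mixedMoment k (p ^ (k * n)) f g l (p ^ a) (p ^ b)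
      ≤ C * (p : ℝ) ^ (n * (crit k - 1) + mixedExponent k l a b + η * n - γ * b + ε * n)
        * max (critMoment p k n f n) (critMoment p k n g n)

theorem HasDecouplingExponent.gainAt_zero [NeZero p] (hk : 0 < k) (hL : 0 < L)
    (hdec : HasDecouplingExponent p k η) : GainAt p k η L 0 η := by
  have hp1 : (1 : ℝ) ≤ p := by exact_mod_cast NeZero.one_le
  have : (0 : ℝ) < p := by linarith
  obtain ⟨C, hC, hdec⟩ := hdec
  refine fun ε hε => ⟨C, hC, fun n a b f g _ _ hLb _ => ?_⟩
  have hbn : b ≤ n := (Nat.le_mul_of_pos_left b hL).trans hLb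
  have hg := critMoment_nonneg p k n g n
  calc mixedMoment k (p ^ (k * n)) f g 0 (p ^ a) (p ^ b)
      = (p ^ a : ℕ) * critMoment p k n g b := mixedMoment_zero f g _ _
    _ ≤ C * (p : ℝ) ^ (a + ((n : ℝ) - b) * (crit k - 1 + η)) * critMoment p k n g n :=
      pow_mul_critMoment_le_of_decouples hk (by linarith) hdec hbn a g
    _ ≤ _ := by
      refine mul_le_mul (mul_le_mul_of_nonneg_left (Real.rpow_le_rpow_of_exponent_le hp1 ?_)
        (by positivity)) (le_max_right _ _) hg (by positivity)
      have : 0 ≤ ε * n := by positivity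
      simp only [mixedExponent, crit, Nat.cast_zero]
      linarith

theorem HasDecouplingExponent.gainAt_crude [NeZero p] (hη : 0 ≤ η) (hkL : k ≤ L) (hl : 0 < l)
    (hlk : l ≤ k) (hdec : HasDecouplingExponent p k η) : GainAt p k η L l (-(k * crit k)) := by
  have hp1 : (1 : ℝ) ≤ p := by exact_mod_cast NeZero.one_le
  have : (0 : ℝ) < p := by linarith
  have hk : 0 < k := hl.trans_le hlk
  have hk1 : (1 : ℝ) ≤ k := by exact_mod_cast hk
  have hcrit := crit_mono hlk
  have hcritl := one_le_crit hl
  obtain ⟨C, hC, hdec⟩ := hdec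
  refine fun ε hε => ⟨2 * C, by linarith, fun n a b f g hab _ hLb _ => ?_⟩
  set e := n * (crit k - 1) + mixedExponent k l a b + η * n - -(k * crit k) * b + ε * n with he
  set U := max (critMoment p k n f n) (critMoment p k n g n)
  have hU : 0 ≤ U := (critMoment_nonneg p k n f n).trans (le_max_left _ _)
  have hkb : k * b ≤ n := (Nat.mul_le_mul_right b hkL).trans hLb
  have hakb : a ≤ k * b := by
    obtain ⟨m, rfl⟩ := Nat.exists_eq_add_of_le hlk
    rw [Nat.add_sub_cancel_left] at hab
    nlinarith
  have hakb' : (a : ℝ) ≤ k * b := by exact_mod_cast hakb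
  have bound : ∀ (c d : ℕ) (h : ℤ →₀ ℂ), d ≤ n → c + ((n : ℝ) - d) * (crit k - 1 + η) ≤ e →
      critMoment p k n h n ≤ U → (p ^ c : ℕ) * critMoment p k n h d ≤ C * (p : ℝ) ^ e * U :=
    fun c d h hd hexp hh =>
      (pow_mul_critMoment_le_of_decouples hk (by linarith) hdec hd c h).trans
        (mul_le_mul (by gcongr) hh (critMoment_nonneg p k n h n) (by positivity))
  have hεn : 0 ≤ ε * n := by positivity
  have ha : (0 : ℝ) ≤ a := a.cast_nonneg
  have hb : (0 : ℝ) ≤ b := b.cast_nonneg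
  have hg := bound a b g ((Nat.le_mul_of_pos_left b hk).trans hkb) (by
    rw [he, mixedExponent]
    nlinarith [mul_nonneg hb hη, mul_le_mul_of_nonneg_right hakb' (by linarith : 0 ≤ crit l),
      mul_le_mul_of_nonneg_left hcrit (by positivity : (0 : ℝ) ≤ k * b),
      mul_nonneg hb (by linarith : 0 ≤ crit l)]) (le_max_right _ _)
  have hf := bound b a f (hakb.trans hkb) (by
    rw [he, mixedExponent]
    nlinarith [mul_nonneg ha hη, mul_nonneg ha (sub_nonneg.2 hcrit),
      mul_nonneg hb (by linarith : 0 ≤ crit l),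
      mul_nonneg (mul_nonneg hb (by linarith : 0 ≤ crit k)) (sub_nonneg.2 hk1)]) (le_max_left _ _)
  refine (mixedMoment_le_add f g hlk (p ^ a) (p ^ b)).trans ((add_le_add hg hf).trans_eq ?_)
  ring

theorem le_of_pow_succ_le {Q Q₁ Q₂ C₁ C₂ P U e₁ e₂ e : ℝ} {m : ℕ} (hQ₂ : 0 ≤ Q₂) (hC₁ : 1 ≤ C₁)
    (hC₂ : 1 ≤ C₂) (hP : 0 < P) (hU : 0 ≤ U) (h : Q ^ (m + 1) ≤ Q₁ * Q₂ ^ m)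
    (h₁ : Q₁ ≤ C₁ * P ^ e₁ * U) (h₂ : Q₂ ≤ C₂ * P ^ e₂ * U) (he : e₁ + m * e₂ = (m + 1) * e) :
    Q ≤ C₁ * C₂ * P ^ e * U := by
  refine le_of_pow_le_pow_left₀ (Nat.succ_ne_zero m) (by positivity) ?_
  have hC : C₁ * C₂ ^ m ≤ (C₁ * C₂) ^ (m + 1) := by
    rw [mul_pow]
    gcongr
    · exact le_self_pow₀ hC₁ m.succ_ne_zero
    · exact m.le_succ
  calc Q ^ (m + 1) ≤ Q₁ * Q₂ ^ m := h
    _ ≤ (C₁ * P ^ e₁ * U) * (C₂ * P ^ e₂ * U) ^ m := by gcongr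
    _ = C₁ * C₂ ^ m * (P ^ e₁ * (P ^ e₂) ^ m) * U ^ (m + 1) := by ring
    _ ≤ (C₁ * C₂) ^ (m + 1) * (P ^ e₁ * (P ^ e₂) ^ m) * U ^ (m + 1) := by gcongr
    _ = (C₁ * C₂ * P ^ e * U) ^ (m + 1) := by
      rw [← Real.rpow_mul_natCast hP.le, ← Real.rpow_add hP, mul_comm e₂, he, mul_pow _ U,
        mul_pow _ (P ^ e), ← Real.rpow_mul_natCast hP.le, mul_comm e, Nat.cast_succ]

theorem GainAt.interpolate [NeZero p] {m : ℕ} {γ₁ γ₂ ε : ℝ} (hlm : l + 1 + m = k)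
    (h₁ : GainAt p k η L m γ₁) (h₂ : GainAt p k η L l γ₂) (hε : 0 < ε) :
    ∃ C : ℝ, 1 ≤ C ∧ ∀ (n c : ℕ) (f g : ℤ →₀ ℂ), L ∣ c → L * ((m + 1) * c) ≤ n →
      L * ((l + 1) * c) ≤ n → Transverse p f g →
      mixedMoment k (p ^ (k * n)) f g (l + 1) (p ^ ((m + 1) * c)) (p ^ ((l + 1) * c))
        ≤ C * (p : ℝ) ^ (n * (crit k - 1) + mixedExponent k (l + 1) ((m + 1) * c) ((l + 1) * c)
            + η * n - (γ₁ / (l + 1) + m / (m + 1) * γ₂) * ((l + 1) * c : ℕ) + ε * n)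
          * max (critMoment p k n f n) (critMoment p k n g n) := by
  have hp0 : (0 : ℝ) < p := by exact_mod_cast NeZero.pos p
  obtain ⟨C₁, hC₁, h₁⟩ := h₁ ε hε
  obtain ⟨C₂, hC₂, h₂⟩ := h₂ ε hε
  refine ⟨C₁ * C₂, one_le_mul_of_one_le_of_one_le hC₁ hC₂, fun n c f g hc hmn hln hfg => ?_⟩
  have hgf := h₁ n ((l + 1) * c) ((m + 1) * c) g f
    (by rw [show k - m + 1 = l + 2 by omega]; nlinarith [Nat.zero_le (m * c)]) (hc.mul_left _) hmn
    hfg.symm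
  have hfg := h₂ n ((m + 1) * c) ((l + 1) * c) f g
    (by rw [show k - l + 1 = m + 2 by omega]; nlinarith [Nat.zero_le (l * c)]) (hc.mul_left _) hln
    hfg
  rw [max_comm] at hgf
  refine le_of_pow_succ_le (mixedMoment_nonneg _ _ _ _ _) hC₁ hC₂ hp0
    ((critMoment_nonneg p k n f n).trans (le_max_left _ _)) (mixedMoment_pow_le f g _ _ hlm)
    hgf hfg ?_
  have hgain : (m + 1 : ℝ) * ((γ₁ / (l + 1) + m / (m + 1) * γ₂) * ((l + 1) * c : ℕ))
      = γ₁ * ((m + 1) * c : ℕ) + m * (γ₂ * ((l + 1) * c : ℕ)) := by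
    push_cast
    field_simp
  linear_combination mixedExponent_interpolate hlm ((m + 1) * c) ((l + 1) * c) + hgain

theorem exists_eq_mul_dvd_of_mul_dvd {l F L b : ℕ} (hl : l ∣ F) (hb : F * L ∣ b) :
    ∃ c, b = l * c ∧ L ∣ c := by
  obtain ⟨e, rfl⟩ := hl
  obtain ⟨z, rfl⟩ := hb
  exact ⟨e * L * z, by ring, e * z, by ring⟩

open Nat in
theorem GainAt.succ [Fact p.Prime] {m : ℕ} {γ₁ γ₂ : ℝ} (hlm : l + 1 + m = k) (hm : 0 < m)
    (hkp : k < p) (hL : 0 < L) (hdec : DecouplesEps p (l + 1)) (h₁ : GainAt p k η L m γ₁)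
    (h₂ : GainAt p k η L l γ₂) :
    GainAt p k η (k ! * L) (l + 1) (γ₁ / (l + 1) + m / (m + 1) * γ₂) := by
  intro ε hε
  have hp1 : (1 : ℝ) ≤ p := by exact_mod_cast NeZero.one_le
  have hp0 : (0 : ℝ) < p := by linarith
  obtain ⟨D, hD, hcong⟩ := hdec.mixedMoment_le (k := k) l.succ_pos (by omega) hkp (half_pos hε)
  obtain ⟨C, hC, hinter⟩ := h₁.interpolate hlm h₂ (half_pos hε)
  refine ⟨D * C, one_le_mul_of_one_le_of_one_le hD hC, fun n a b f g hab hdvd hbn hfg => ?_⟩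
  have hkfac : k ≤ k ! := Nat.self_le_factorial k
  obtain ⟨c, rfl, hc⟩ :=
    exists_eq_mul_dvd_of_mul_dvd (Nat.dvd_factorial l.succ_pos (by omega)) hdvd
  have scale : ∀ i, i ≤ k → L * (i * c) ≤ n := fun i hi => calc
    L * (i * c) ≤ L * (k ! * ((l + 1) * c)) := by
      gcongr
      exacts [hi.trans hkfac, Nat.le_mul_of_pos_left c l.succ_pos]
    _ ≤ n := by linarith
  have hln := (Nat.le_mul_of_pos_left _ hL).trans (scale (l + 1) (by omega))
  have hmn := (Nat.le_mul_of_pos_left _ hL).trans (scale (m + 1) (by omega))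
  obtain ⟨d, hd⟩ : ∃ d, (m + 1) * c = a + d := by
    refine Nat.exists_eq_add_of_le (le_of_mul_le_mul_left (a := l + 1) ?_ l.succ_pos)
    rw [show k - (l + 1) + 1 = m + 1 by omega] at hab
    linarith
  have hI := hinter n c f g hc (scale (m + 1) (by omega)) (scale (l + 1) (by omega)) hfg
  rw [hd] at hI
  have hU : 0 ≤ max (critMoment p k n f n) (critMoment p k n g n) :=
    (critMoment_nonneg p k n f n).trans (le_max_left _ _)
  refine (hcong n a _ d f g hln (by rw [← hd, show k - (l + 1) + 1 = m + 1 by omega]; linarith)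
    hfg).trans ((mul_le_mul_of_nonneg_left hI (by positivity)).trans ?_)
  rw [show ∀ x y z u v : ℝ, x * y * (z * u * v) = x * z * (y * u) * v by intros; ring,
    ← Real.rpow_add hp0]
  refine mul_le_mul_of_nonneg_right (mul_le_mul_of_nonneg_left
    (Real.rpow_le_rpow_of_exponent_le hp1 ?_) (by positivity)) hU
  have hdn : ε / 2 * d ≤ ε / 2 * n := by
    have : d ≤ n := by omega
    gcongr
  simp only [mixedExponent]
  push_cast
  linarith

/-- The effect on the gains `G` of one interpolation followed by one congruencing step. -/
noncomputable def gainStep (k : ℕ) (G : ℕ → ℝ) : ℕ → ℝ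
  | 0 => G 0
  | l + 1 => G (k - (l + 1)) / (l + 1) + (k - (l + 1) : ℕ) / ((k - (l + 1) : ℕ) + 1) * G l

/-- The gains in the bounds for mixed moments after `N` steps. -/
noncomputable def gain (k : ℕ) (η : ℝ) (N : ℕ) : ℕ → ℝ :=
  (gainStep k)^[N] fun l => if l = 0 then η else -(k * crit k)

theorem gain_succ (k : ℕ) (η : ℝ) (N : ℕ) : gain k η (N + 1) = gainStep k (gain k η N) :=
  Function.iterate_succ_apply' _ _ _

theorem gain_apply_zero (k : ℕ) (η : ℝ) (N : ℕ) : gain k η N 0 = η := by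
  induction N with
  | zero => rfl
  | succ N ih => rw [gain_succ, gainStep, ih]

open Nat in
theorem HasDecouplingExponent.gainAt_gain [Fact p.Prime] (hk : 0 < k) (hkp : k < p)
    (hlow : ∀ l, 0 < l → l < k → DecouplesEps p l) (hη : 0 ≤ η)
    (hdec : HasDecouplingExponent p k η) (N : ℕ) :
    ∀ l < k, GainAt p k η (k ! ^ (N + 1)) l (gain k η N l) := by
  have hpos : ∀ N, 0 < k ! ^ N := fun N => pow_pos (Nat.factorial_pos k) N
  induction N with
  | zero =>
    rintro (_ | l) hl
    · exact hdec.gainAt_zero hk (hpos _)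
    · rw [zero_add, pow_one]
      exact hdec.gainAt_crude hη (Nat.self_le_factorial k) l.succ_pos hl.le
  | succ N ih =>
    rintro (_ | l) hl
    · rw [gain_apply_zero]
      exact hdec.gainAt_zero hk (hpos _)
    · rw [gain_succ, gainStep, pow_succ']
      exact (ih _ (by omega)).succ (by omega) (by omega) hkp (hpos _)
        (hlow _ l.succ_pos hl) (ih l (by omega))

end Gain

section SumGain

theorem sum_range_gainStep (K : ℕ) (G : ℕ → ℝ) :
    ∑ l ∈ range K, gainStep (K + 1) G (l + 1)
      = ∑ l ∈ range K, G (l + 1) + K / (K + 1) * G 0 := by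
  have reflect : ∑ l ∈ range K, G (K - l) / ((l : ℝ) + 1)
      = ∑ l ∈ range K, G (l + 1) / ((K : ℝ) - l) := by
    rw [← sum_range_reflect]
    refine sum_congr rfl fun l hl => ?_
    rw [mem_range] at hl
    rw [show K - (K - 1 - l) = l + 1 by omega, show K - 1 - l = K - (l + 1) by omega,
      Nat.cast_sub hl]
    push_cast
    ring
  have shift : ∑ l ∈ range K, ((K : ℝ) - l) / ((K : ℝ) - l + 1) * G l
      = ∑ l ∈ range K, ((K : ℝ) - l - 1) / ((K : ℝ) - l) * G (l + 1) + K / (K + 1) * G 0 := by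
    have := (sum_range_succ (fun l : ℕ => ((K : ℝ) - l) / ((K : ℝ) - l + 1) * G l) K).symm.trans
      (sum_range_succ' _ K)
    rw [sub_self, zero_div, zero_mul, add_zero] at this
    rw [this]
    push_cast
    ring_nf
  have step : ∀ l ∈ range K, gainStep (K + 1) G (l + 1)
      = G (K - l) / ((l : ℝ) + 1) + ((K : ℝ) - l) / ((K : ℝ) - l + 1) * G l := fun l hl => by
    rw [gainStep, Nat.add_sub_add_right, Nat.cast_sub (mem_range.1 hl).le]
  rw [sum_congr rfl step, sum_add_distrib, reflect, shift, ← add_assoc, ← sum_add_distrib]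
  congr 1
  refine sum_congr rfl fun l hl => ?_
  have : (K : ℝ) - l ≠ 0 := sub_ne_zero.2 (by exact_mod_cast (mem_range.1 hl).ne')
  field_simp
  ring

theorem sum_range_gain (K : ℕ) (η : ℝ) (N : ℕ) :
    ∑ l ∈ range K, gain (K + 1) η N (l + 1)
      = K * (-((K + 1 : ℕ) * crit (K + 1)) + N * (η / (K + 1))) := by
  induction N with
  | zero => simp [gain]
  | succ N ih =>
    rw [gain_succ, sum_range_gainStep, ih, gain_apply_zero]
    push_cast
    ring

theorem exists_le_gain {k : ℕ} (hk : 2 ≤ k) (η : ℝ) (N : ℕ) :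
    ∃ l < k, -(k * crit k) + N * (η / k) ≤ gain k η N l := by
  obtain ⟨K, rfl⟩ := Nat.exists_eq_add_of_le' (one_le_two.trans hk)
  obtain ⟨l, hl, h⟩ := exists_le_of_sum_le (s := range K)
    (f := fun _ => -((K + 1 : ℕ) * crit (K + 1)) + N * (η / (K + 1)))
    (g := fun l => gain (K + 1) η N (l + 1)) (nonempty_range_iff.2 (by omega))
    (by rw [sum_range_gain, sum_const, card_range, nsmul_eq_mul])
  refine ⟨l + 1, Nat.succ_lt_succ (mem_range.1 hl), ?_⟩
  push_cast at h ⊢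
  exact h

end SumGain

section Orthogonality

variable {M k : ℕ} [NeZero M]

theorem momentChar_eq_of_modEq {x y : ℤ} (h : x ≡ y [ZMOD M]) :
    (momentChar x : AddChar (Fin k → ZMod M) Circle) = momentChar y := by
  ext g
  rw [momentChar_apply, momentChar_apply, (ZMod.intCast_eq_intCast_iff _ _ _).2 h]

theorem modEq_of_momentChar_eq (hk : 0 < k) {x y : ℤ}
    (h : (momentChar x : AddChar (Fin k → ZMod M) Circle) = momentChar y) : x ≡ y [ZMOD M] := by
  have h₀ := DFunLike.congr_fun h (Pi.single ⟨0, hk⟩ 1)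
  simp only [momentChar_apply, Pi.single_apply, ite_mul, one_mul, zero_mul, sum_ite_eq', mem_univ,
    if_true, zero_add, pow_one] at h₀
  exact (ZMod.intCast_eq_intCast_iff _ _ _).1 (ZMod.injective_toCircle h₀)

theorem expSum_residuePart_modulus (f : ℤ →₀ ℂ) (r : ℤ) (g : Fin k → ZMod M) :
    expSum (residuePart f M r) g
      = (∑ x ∈ (residuePart f M r).support, residuePart f M r x) * momentChar r g := by
  rw [expSum_eq_sum, sum_mul]
  refine sum_congr rfl fun x hx => ?_
  rw [momentChar_eq_of_modEq (mem_support_residuePart.1 hx).2]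

theorem moment_two_eq_levelMoment (hk : 0 < k) (f : ℤ →₀ ℂ) :
    moment (1 : (Fin k → ZMod M) → ℝ) f 2 = levelMoment (1 : (Fin k → ZMod M) → ℝ) f 2 M := by
  classical
  set A : ℕ → ℂ := fun r => ∑ x ∈ (residuePart f M r).support, residuePart f M r x
  set ψ : ℕ → AddChar (Fin k → ZMod M) ℂ := fun r => Circle.coeHom.compAddChar (momentChar r)
  have hψ : ∀ r ∈ range M, ∀ r' ∈ range M, ψ r = ψ r' → r' = r := fun r hr r' hr' h => by
    have hmod := modEq_of_momentChar_eq (M := M) hk (x := r) (y := r') <| by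
      ext g
      exact DFunLike.congr_fun h g
    exact (((Int.natCast_modEq_iff).1 hmod).eq_of_lt_of_lt (mem_range.1 hr) (mem_range.1 hr')).symm
  have hdiag : ∀ r ∈ range M, (∑ r' ∈ range M, if ψ r = ψ r' then A r * star (A r') else 0)
      = ((‖A r‖ ^ 2 : ℝ) : ℂ) := fun r hr => by
    rw [sum_eq_single_of_mem r hr fun r' hr' hne => if_neg fun h => hne (hψ r hr r' hr' h),
      if_pos rfl, ← Complex.normSq_eq_norm_sq, ← Complex.mul_conj, starRingEnd_apply]
  have horth := sum_norm_sum_mul_addChar_sq (range M) A ψ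
  rw [sum_congr rfl hdiag] at horth
  have hnorm : ∀ (r : ℕ) (g : Fin k → ZMod M), ‖expSum (residuePart f M r) g‖ = ‖A r‖ :=
    fun r g => by rw [expSum_residuePart_modulus, norm_mul, Circle.norm_coe, mul_one]
  have hsum : ∀ g : Fin k → ZMod M, expSum f g = ∑ r ∈ range M, A r * ψ r g := fun g => by
    conv_lhs => rw [residuePart_one_eq_sum_range f (NeZero.pos M), expSum_sum]
    exact sum_congr rfl fun r _ => expSum_residuePart_modulus f r g
  simp only [levelMoment, moment, Pi.one_apply, one_mul, hnorm, hsum, sum_const, card_univ,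
    nsmul_eq_mul, ← mul_sum]
  exact_mod_cast horth

end Orthogonality

section BaseCases

variable {p k n : ℕ} [NeZero p] {K K' η η' : ℝ}

theorem Decouples.mono (h : Decouples p k n K) (hK : K ≤ K') : Decouples p k n K' := fun f =>
  (h f).trans (by gcongr; exact critMoment_nonneg p k n f n)

theorem HasDecouplingExponent.mono (h : HasDecouplingExponent p k η) (hη : η ≤ η') :
    HasDecouplingExponent p k η' := by
  have hp1 : (1 : ℝ) ≤ p := by exact_mod_cast NeZero.one_le
  obtain ⟨C, hC, hdec⟩ := h
  exact ⟨C, hC, fun n => (hdec n).mono (by gcongr)⟩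

theorem decouples_one (p n : ℕ) [NeZero p] : Decouples p 1 n 1 := by
  intro f
  have hcrit : crit 1 = 1 := by norm_num [crit]
  simpa [critMoment, levelMoment_one, hcrit] using
    (moment_two_eq_levelMoment (M := p ^ (1 * n)) one_pos f).le

theorem hasDecouplingExponent_crit (hk : 0 < k) : HasDecouplingExponent p k (crit k) := by
  have hp0 : (0 : ℝ) < p := by exact_mod_cast NeZero.pos p
  obtain ⟨q, hq⟩ := Nat.exists_eq_succ_of_ne_zero (by positivity : k * (k + 1) ≠ 0)
  have hq' : (k : ℝ) * (k + 1) = q + 1 := by exact_mod_cast hq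
  refine ⟨1, le_rfl, fun n f => ?_⟩
  have h := levelMoment_le_levelMoment_mul (k := k) (M := p ^ (k * n)) zero_le_one f q one_pos
    (pow_pos (NeZero.pos p) n)
  rw [one_mul, ← Real.rpow_add hp0, critMoment, critMoment, pow_zero, hq]
  convert h using 2
  · rw [Nat.cast_pow, ← pow_mul, ← Real.rpow_natCast, crit, hq']
    congr 1
    push_cast
    ring
  · rw [one_mul]

end BaseCases

section BroadNarrow

theorem exists_norm_sum_le_or {ι E : Type*} [SeminormedAddCommGroup E] {s : Finset ι}
    (hs : s.Nonempty) (z : ι → E) :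
    ∃ ξ ∈ s, ‖∑ i ∈ s, z i‖ ≤ 2 * ‖z ξ‖ ∨ ∃ ζ ∈ s, ζ ≠ ξ ∧
      ‖∑ i ∈ s, z i‖ ≤ 2 * #s * ‖z ζ‖ ∧ ‖∑ i ∈ s, z i‖ ≤ 2 * #s * ‖z ξ‖ := by
  classical
  obtain ⟨ξ, hξ, hmax⟩ := exists_max_image s (fun ξ => ‖z ξ‖) hs
  refine ⟨ξ, hξ, or_iff_not_imp_left.2 fun hlarge => ?_⟩
  by_contra! hsmall
  have hcard : (0 : ℝ) < #s := by exact_mod_cast hs.card_pos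
  have hsub : ∀ ζ ∈ s.erase ξ, 2 * #s * ‖z ζ‖ ≤ ‖∑ i ∈ s, z i‖ := fun ζ hζ => by
    by_contra! h
    refine (hsmall ζ (mem_of_mem_erase hζ) (ne_of_mem_erase hζ) h.le).not_ge (h.le.trans ?_)
    gcongr
    exact hmax ζ (mem_of_mem_erase hζ)
  have hrest : 2 * #s * ∑ ζ ∈ s.erase ξ, ‖z ζ‖ ≤ #s * ‖∑ i ∈ s, z i‖ := by
    rw [mul_sum]
    refine (sum_le_card_nsmul _ _ _ hsub).trans ?_
    rw [nsmul_eq_mul]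
    gcongr
    exact erase_subset ξ s
  have htri : ‖∑ i ∈ s, z i‖ ≤ ‖z ξ‖ + ∑ ζ ∈ s.erase ξ, ‖z ζ‖ := by
    rw [add_sum_erase _ (fun ζ => ‖z ζ‖) hξ]
    exact norm_sum_le _ _
  nlinarith

theorem norm_sum_pow_le_broad_narrow {ι E : Type*} [DecidableEq ι] [SeminormedAddCommGroup E]
    (s : Finset ι) (z : ι → E) {i q : ℕ} (hi : i ≤ q) (hq : q ≠ 0) :
    ‖∑ ξ ∈ s, z ξ‖ ^ q ≤ 2 ^ q * ∑ ξ ∈ s, ‖z ξ‖ ^ q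
      + (2 * #s) ^ q * ∑ ξ ∈ s, ∑ ζ ∈ s.erase ξ, ‖z ζ‖ ^ (q - i) * ‖z ξ‖ ^ i := by
  rcases s.eq_empty_or_nonempty with rfl | hs
  · simp [hq]
  obtain ⟨ξ, hξ, hnarrow | ⟨ζ, hζ, hne, hbζ, hbξ⟩⟩ := exists_norm_sum_le_or hs z
  · refine le_add_of_le_of_nonneg ?_ (by positivity)
    calc ‖∑ ξ ∈ s, z ξ‖ ^ q ≤ (2 * ‖z ξ‖) ^ q := by gcongr
      _ = 2 ^ q * ‖z ξ‖ ^ q := mul_pow _ _ _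
      _ ≤ _ := by
        gcongr
        exact single_le_sum (f := fun ξ => ‖z ξ‖ ^ q) (fun _ _ => by positivity) hξ
  · refine le_add_of_nonneg_of_le (by positivity) ?_
    calc ‖∑ ξ ∈ s, z ξ‖ ^ q = ‖∑ ξ ∈ s, z ξ‖ ^ (q - i) * ‖∑ ξ ∈ s, z ξ‖ ^ i := by
          rw [← pow_add, Nat.sub_add_cancel hi]
      _ ≤ (2 * #s * ‖z ζ‖) ^ (q - i) * (2 * #s * ‖z ξ‖) ^ i := by gcongr
      _ = (2 * #s) ^ q * (‖z ζ‖ ^ (q - i) * ‖z ξ‖ ^ i) := by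
          rw [mul_pow _ ‖z ζ‖, mul_pow _ ‖z ξ‖, mul_mul_mul_comm, ← pow_add, Nat.sub_add_cancel hi]
      _ ≤ _ := by
        gcongr
        refine (single_le_sum (f := fun ζ => ‖z ζ‖ ^ (q - i) * ‖z ξ‖ ^ i)
          (fun _ _ => by positivity) (mem_erase.2 ⟨hne, hζ⟩)).trans ?_
        exact single_le_sum (f := fun ξ => ∑ ζ ∈ s.erase ξ, ‖z ζ‖ ^ (q - i) * ‖z ξ‖ ^ i)
          (fun _ _ => by positivity) hξ

variable {p k l n : ℕ}

theorem mixedMoment_one_one {M : ℕ} [NeZero M] (f g : ℤ →₀ ℂ) (l : ℕ) :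
    mixedMoment k M f g l 1 1 = ∑ v : Fin k → ZMod M,
      ‖expSum g v‖ ^ (k * (k + 1) - l * (l + 1)) * ‖expSum f v‖ ^ (l * (l + 1)) := by
  simp [mixedMoment, levelMoment, moment, residuePart_one]

theorem critMoment_zero_le_broad_narrow [NeZero p] (hk : 0 < k) (hl : l ≤ k) (f : ℤ →₀ ℂ) :
    critMoment p k n f 0 ≤ 2 ^ (k * (k + 1)) * critMoment p k n f 1
      + (2 * p) ^ (k * (k + 1)) * ∑ ξ ∈ range p, ∑ ζ ∈ (range p).erase ξ,
        mixedMoment k (p ^ (k * n)) (residuePart f p ξ) (residuePart f p ζ) l 1 1 := by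
  have hle : l * (l + 1) ≤ k * (k + 1) := by gcongr
  have hsum : ∀ v : Fin k → ZMod (p ^ (k * n)),
      expSum f v = ∑ ξ ∈ range p, expSum (residuePart f p ξ) v := fun v => by
    rw [← expSum_sum, ← residuePart_one_eq_sum_range f (NeZero.pos p)]
  simp only [mixedMoment_one_one, critMoment, pow_zero, pow_one, levelMoment_one]
  simp only [levelMoment, moment, Pi.one_apply, one_mul]
  simp only [hsum]
  refine (sum_le_sum fun v _ =>
    norm_sum_pow_le_broad_narrow (range p) _ hle (by positivity)).trans_eq ?_
  rw [sum_add_distrib, ← mul_sum, ← mul_sum, card_range]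
  congr 2
  · exact sum_comm
  · rw [sum_comm]
    exact sum_congr rfl fun _ _ => sum_comm

theorem transverse_residuePart (f : ℤ →₀ ℂ) {ξ ζ : ℕ} (hξ : ξ < p) (hζ : ζ < p) (hne : ζ ≠ ξ) :
    Transverse p (residuePart f p ξ) (residuePart f p ζ) := fun x hx y hy hxy => by
  have h := (mem_support_residuePart.1 hy).2.symm.trans
    (hxy.symm.trans (mem_support_residuePart.1 hx).2)
  exact hne ((Int.natCast_modEq_iff.1 h).eq_of_lt_of_lt hζ hξ)

/-- Bilinear decoupling at scale `p ^ n`, with constant `D`, for a product of `l(l+1)` copies of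
one exponential sum and `k(k+1) - l(l+1)` copies of a second sum transverse to it. -/
def BilinearDecouples (p k l n : ℕ) [NeZero p] (D : ℝ) : Prop :=
  ∀ f g, Transverse p f g → mixedMoment k (p ^ (k * n)) f g l 1 1
    ≤ D * (p : ℝ) ^ (n * (crit k - 1)) * max (critMoment p k n f n) (critMoment p k n g n)

theorem two_pow_le_half_mul_rpow (hk : 2 ≤ k) (hp : 16 ≤ p) :
    (2 : ℝ) ^ (k * (k + 1)) ≤ 1 / 2 * (p : ℝ) ^ (crit k - 1) := by
  have hk' : (2 : ℝ) ≤ k := by exact_mod_cast hk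
  have hcrit : (1 : ℝ) + k * (k + 1) ≤ 4 * (crit k - 1) := by
    rw [crit]
    nlinarith
  have : (2 : ℝ) * 2 ^ (k * (k + 1)) ≤ (p : ℝ) ^ (crit k - 1) := calc
    (2 : ℝ) * 2 ^ (k * (k + 1)) = 2 ^ ((1 : ℝ) + k * (k + 1)) := by
      rw [Real.rpow_add two_pos, Real.rpow_one]
      exact_mod_cast rfl
    _ ≤ 2 ^ (4 * (crit k - 1)) := Real.rpow_le_rpow_of_exponent_le one_le_two hcrit
    _ = (16 : ℝ) ^ (crit k - 1) := by
      rw [Real.rpow_mul two_pos.le]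
      norm_num
    _ ≤ _ := Real.rpow_le_rpow (by norm_num) (by exact_mod_cast hp) (by nlinarith)
  linarith

theorem Decouples.succ [NeZero p] {K D : ℝ} (h : Decouples p k n K) (hK : 0 ≤ K) (hD : 0 ≤ D)
    (hb : BilinearDecouples p k l (n + 1) D) (hk : 2 ≤ k) (hl : l ≤ k) (hp : 16 ≤ p) :
    Decouples p k (n + 1) (K / 2 + (2 * p) ^ (k * (k + 1)) * (p ^ 2 * D)) := by
  intro f
  have hp0 : (0 : ℝ) < p := by exact_mod_cast NeZero.pos p
  have hU := critMoment_nonneg p k (n + 1) f (n + 1)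
  have hnarrow := h.critMoment_le hK (by omega) (add_comm 1 n) f
  have hpart : ∀ ξ : ℤ, critMoment p k (n + 1) (residuePart f p ξ) (n + 1)
      ≤ critMoment p k (n + 1) f (n + 1) := fun ξ =>
    levelMoment_residuePart_le zero_le_one f (by positivity) (dvd_pow_self p n.succ_ne_zero) ξ
  set E := (p : ℝ) ^ (((n + 1 : ℕ) : ℝ) * (crit k - 1)) with hE
  set U := critMoment p k (n + 1) f (n + 1)
  have hpair : ∀ ξ ∈ range p, ∀ ζ ∈ (range p).erase ξ, mixedMoment k (p ^ (k * (n + 1)))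
      (residuePart f p ξ) (residuePart f p ζ) l 1 1 ≤ D * E * U := fun ξ hξ ζ hζ =>
    (hb _ _ (transverse_residuePart f (mem_range.1 hξ) (mem_range.1 (mem_of_mem_erase hζ))
      (ne_of_mem_erase hζ))).trans (by gcongr; exact max_le (hpart _) (hpart _))
  have hbroad : ∑ ξ ∈ range p, ∑ ζ ∈ (range p).erase ξ, mixedMoment k (p ^ (k * (n + 1)))
      (residuePart f p ξ) (residuePart f p ζ) l 1 1 ≤ p ^ 2 * (D * E * U) := calc
    _ ≤ ∑ _ξ ∈ range p, ∑ _ζ ∈ range p, D * E * U := sum_le_sum fun ξ hξ =>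
      (sum_le_sum (hpair ξ hξ)).trans
        (sum_le_sum_of_subset_of_nonneg (erase_subset _ _) fun _ _ _ => by positivity)
    _ = p ^ 2 * (D * E * U) := by
      simp only [sum_const, card_range, nsmul_eq_mul]
      ring
  have hgain : 2 ^ (k * (k + 1)) * (p : ℝ) ^ (n * (crit k - 1)) ≤ 1 / 2 * E := by
    rw [hE, Nat.cast_succ, add_one_mul, Real.rpow_add hp0, mul_left_comm, mul_comm]
    gcongr
    exact two_pow_le_half_mul_rpow hk hp
  calc critMoment p k (n + 1) f 0
      ≤ 2 ^ (k * (k + 1)) * (K * (p : ℝ) ^ (n * (crit k - 1)) * U)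
        + (2 * p) ^ (k * (k + 1)) * (p ^ 2 * (D * E * U)) :=
        (critMoment_zero_le_broad_narrow (by omega) hl f).trans (by gcongr)
    _ = K * (2 ^ (k * (k + 1)) * (p : ℝ) ^ (n * (crit k - 1))) * U
        + (2 * p) ^ (k * (k + 1)) * (p ^ 2 * (D * E * U)) := by ring
    _ ≤ K * (1 / 2 * E) * U + (2 * p) ^ (k * (k + 1)) * (p ^ 2 * (D * E * U)) := by gcongr
    _ = _ := by ring

theorem hasDecouplingExponent_of_bilinear [NeZero p] {C η : ℝ} (hC : 1 ≤ C) (hη : 0 ≤ η)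
    (hb : ∀ n, BilinearDecouples p k l n (C * (p : ℝ) ^ (η * n))) (hk : 2 ≤ k) (hl : l ≤ k)
    (hp : 16 ≤ p) : HasDecouplingExponent p k η := by
  have hp1 : (1 : ℝ) ≤ p := by exact_mod_cast NeZero.one_le
  set B : ℝ := (2 * p) ^ (k * (k + 1)) * (p ^ 2 * C) with hB
  have hB1 : 1 ≤ B := one_le_mul_of_one_le_of_one_le (one_le_pow₀ (by linarith))
    (one_le_mul_of_one_le_of_one_le (one_le_pow₀ hp1) hC)
  refine ⟨2 * B, by linarith, fun n => ?_⟩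
  induction n with
  | zero =>
    intro f
    have := critMoment_nonneg p k 0 f 0
    simp only [Nat.cast_zero, mul_zero, zero_mul, Real.rpow_zero, mul_one]
    nlinarith
  | succ n ih =>
    refine (ih.succ (by positivity) (by positivity) (hb (n + 1)) hk hl hp).mono ?_
    calc _ = B * (p : ℝ) ^ (η * n) + B * (p : ℝ) ^ (η * (n + 1 : ℕ)) := by
          rw [hB]
          ring
      _ ≤ B * (p : ℝ) ^ (η * (n + 1 : ℕ)) + B * (p : ℝ) ^ (η * (n + 1 : ℕ)) := by
          gcongr
          exact n.le_succ
      _ = _ := by ring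

end BroadNarrow

section Improvement

variable {p k l L : ℕ} {η γ θ : ℝ}

theorem exists_dvd_mul_le_and_mul_le_add (hL : 0 < L) {t : ℝ} (ht : 0 ≤ t) (htL : t * L ≤ 1)
    (n : ℕ) : ∃ b, L ∣ b ∧ L * b ≤ n ∧ t * n ≤ b + L := by
  refine ⟨L * (n / (L * L)), dvd_mul_right _ _, ?_, ?_⟩
  · rw [← mul_assoc]
    exact Nat.mul_div_le n (L * L)
  · have hlt : (n : ℝ) ≤ L * ((L * (n / (L * L)) : ℕ) + L) := by
      have := (Nat.lt_mul_div_succ n (by positivity : 0 < L * L)).le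
      exact_mod_cast this.trans_eq (by ring)
    calc t * n ≤ t * (L * ((L * (n / (L * L)) : ℕ) + L)) := by gcongr
      _ = t * L * ((L * (n / (L * L)) : ℕ) + L) := by ring
      _ ≤ (L * (n / (L * L)) : ℕ) + L := mul_le_of_le_one_left (by positivity) htL

theorem GainAt.exists_bilinearDecouples [NeZero p] (h : GainAt p k η L l γ)
    (hlk : l < k) (hL : 0 < L) (hγ : (k : ℝ) * (k + 1) + 2 ≤ γ) (hθ : 0 < θ)
    (hθL : 2 * θ * L ≤ 1) :
    ∃ C : ℝ, 1 ≤ C ∧ ∀ n, BilinearDecouples p k l n (C * (p : ℝ) ^ ((η - θ) * n)) := by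
  have hp1 : (1 : ℝ) ≤ p := by exact_mod_cast NeZero.one_le
  have hp0 : (0 : ℝ) < p := by linarith
  obtain ⟨C, hC, h⟩ := h θ hθ
  refine ⟨C * (p : ℝ) ^ L, one_le_mul_of_one_le_of_one_le hC (one_le_pow₀ hp1),
    fun n f g hfg => ?_⟩
  set U := max (critMoment p k n f n) (critMoment p k n g n)
  have hU : 0 ≤ U := (critMoment_nonneg p k n f n).trans (le_max_left _ _)
  obtain ⟨b, hb, hbn, hnb⟩ := exists_dvd_mul_le_and_mul_le_add hL (by positivity) hθL n
  have hexp : (b : ℝ) * (k * (k + 1)) + (n * (crit k - 1) + mixedExponent k l 0 b + η * n - γ * b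
      + θ * n) ≤ L + (η - θ) * n + n * (crit k - 1) := by
    have hb0 : (0 : ℝ) ≤ b := b.cast_nonneg
    have hmixed : mixedExponent k l 0 b ≤ b := by
      rw [mixedExponent, Nat.cast_zero]
      nlinarith [crit_mono hlk.le]
    nlinarith [mul_le_mul_of_nonneg_right hγ hb0]
  calc mixedMoment k (p ^ (k * n)) f g l 1 1
      ≤ ((p ^ b : ℕ) : ℝ) ^ (k * (k + 1)) * mixedMoment k (p ^ (k * n)) f g l (p ^ 0) (p ^ b) := by
        simpa using mixedMoment_le_mixedMoment_mul (M := p ^ (k * n)) f g hlk (A := 1)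
          one_pos (pow_pos (NeZero.pos p) b)
    _ ≤ ((p ^ b : ℕ) : ℝ) ^ (k * (k + 1)) * (C * (p : ℝ) ^ (n * (crit k - 1)
          + mixedExponent k l 0 b + η * n - γ * b + θ * n) * U) := by
        gcongr
        exact_mod_cast h n 0 b f g (by simp) hb hbn hfg
    _ = C * (p : ℝ) ^ ((b : ℝ) * (k * (k + 1)) + (n * (crit k - 1)
          + mixedExponent k l 0 b + η * n - γ * b + θ * n)) * U := by
        rw [Real.rpow_add hp0 ((b : ℝ) * (k * (k + 1))), Nat.cast_pow, ← pow_mul,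
          ← Real.rpow_natCast]
        push_cast
        ring
    _ ≤ C * (p : ℝ) ^ (L + (η - θ) * n + n * (crit k - 1)) * U := mul_le_mul_of_nonneg_right
        (mul_le_mul_of_nonneg_left (Real.rpow_le_rpow_of_exponent_le hp1 hexp) (by linarith)) hU
    _ = _ := by
        rw [Real.rpow_add hp0, Real.rpow_add hp0, Real.rpow_natCast]
        ring

open Nat in
theorem exists_hasDecouplingExponent_sub [Fact p.Prime] (hk : 2 ≤ k) (hkp : k < p) (hp : 16 ≤ p)
    (hlow : ∀ l, 0 < l → l < k → DecouplesEps p l) {ε : ℝ} (hε : 0 < ε) :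
    ∃ θ : ℝ, 0 < θ ∧ ∀ η, ε ≤ η → HasDecouplingExponent p k η →
      HasDecouplingExponent p k (η - θ) := by
  have : (0 : ℝ) < k := by positivity
  obtain ⟨N, hN⟩ := exists_nat_ge ((k * crit k + (k * (k + 1) + 2)) / (ε / k))
  rw [div_le_iff₀ (by positivity)] at hN
  set L := k ! ^ (N + 1)
  have hL : 0 < L := pow_pos (Nat.factorial_pos k) _
  refine ⟨min ε (1 / (2 * L)), by positivity, fun η hη hdec => ?_⟩
  obtain ⟨l, hlk, hgain⟩ := exists_le_gain hk η N
  have hη' : N * (ε / k) ≤ N * (η / k) := by gcongr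
  have hθL : 2 * min ε (1 / (2 * L)) * L ≤ 1 := calc
    2 * min ε (1 / (2 * (L : ℝ))) * L ≤ 2 * (1 / (2 * L)) * L := by
      gcongr
      exact min_le_right _ _
    _ = 1 := by field_simp
  obtain ⟨C, hC, hb⟩ := (hdec.gainAt_gain (by omega) hkp hlow (hε.le.trans hη) N l hlk
    ).exists_bilinearDecouples hlk hL (by linarith) (by positivity) hθL
  exact hasDecouplingExponent_of_bilinear hC (by linarith [min_le_left ε (1 / (2 * (L : ℝ)))]) hb
    hk hlk.le hp

theorem DecouplesEps.of_lt [Fact p.Prime] (hk : 2 ≤ k) (hkp : k < p) (hp : 16 ≤ p)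
    (hlow : ∀ l, 0 < l → l < k → DecouplesEps p l) : DecouplesEps p k := by
  intro ε hε
  obtain ⟨θ, hθ, himprove⟩ := exists_hasDecouplingExponent_sub hk hkp hp hlow hε
  have descent : ∀ j : ℕ, HasDecouplingExponent p k (max ε (crit k - j * θ)) := fun j => by
    induction j with
    | zero => exact (hasDecouplingExponent_crit (by omega)).mono (by simp)
    | succ j ih =>
      refine (himprove _ (le_max_left _ _) ih).mono ?_
      rw [← max_sub_sub_right]
      refine max_le_max (by linarith) ?_
      push_cast
      linarith
  obtain ⟨j, hj⟩ := exists_nat_ge (crit k / θ)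
  rw [div_le_iff₀ hθ] at hj
  exact (descent j).mono (max_le le_rfl (by linarith))

theorem decouplesEps [Fact p.Prime] (hp : 16 ≤ p) (hk : 0 < k) (hkp : k < p) :
    DecouplesEps p k := by
  induction k using Nat.strong_induction_on with
  | _ k ih =>
    rcases (Nat.succ_le_of_lt hk).eq_or_lt with rfl | hk2
    · refine fun ε hε => HasDecouplingExponent.mono (η := 0) ⟨1, le_rfl, fun n => ?_⟩ hε.le
      simpa using decouples_one p n
    · exact .of_lt hk2 hkp hp fun l hl hlk => ih l hlk hl (hlk.trans hkp)

end Improvement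

section Counting

variable {k M : ℕ} [NeZero M]

/-- The coefficients equal to `1` on `S` and to `0` elsewhere. -/
noncomputable def indicatorCoeff (S : Finset ℤ) : ℤ →₀ ℂ :=
  Finsupp.indicator S fun _ _ => 1

theorem expSum_indicatorCoeff (S : Finset ℤ) (g : Fin k → ZMod M) :
    expSum (indicatorCoeff S) g = ∑ x ∈ S, (momentChar x g : ℂ) := by
  rw [expSum, indicatorCoeff, Finsupp.linearCombination_apply,
    Finsupp.sum_of_support_subset _ (Finsupp.support_indicator_subset _ _) _ (by simp)]
  exact sum_congr rfl fun x hx => by rw [Finsupp.indicator_of_mem hx, one_smul]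

theorem residuePart_indicatorCoeff (S : Finset ℤ) (N : ℕ) (r : ℤ) :
    residuePart (indicatorCoeff S) N r = indicatorCoeff {x ∈ S | x ≡ r [ZMOD N]} := by
  ext x
  by_cases hx : x ∈ S <;> by_cases hr : x ≡ r [ZMOD N] <;>
    simp [residuePart, indicatorCoeff, Finsupp.indicator_apply, hx, hr]

theorem norm_expSum_indicatorCoeff_le (S : Finset ℤ) (g : Fin k → ZMod M) :
    ‖expSum (indicatorCoeff S) g‖ ≤ #S := by
  rw [expSum_indicatorCoeff]
  refine (norm_sum_le _ _).trans_eq ?_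
  simp only [Circle.norm_coe, sum_const, nsmul_eq_mul, mul_one]

theorem moment_indicatorCoeff_le {S : Finset ℤ} (hS : #S ≤ 1) {q : ℕ} (hq : q ≠ 0) :
    moment (1 : (Fin k → ZMod M) → ℝ) (indicatorCoeff S) q ≤ #S * (M : ℝ) ^ k := by
  have hpow : ∀ g : Fin k → ZMod M, ‖expSum (indicatorCoeff S) g‖ ^ q ≤ #S := fun g => by
    have hle := norm_expSum_indicatorCoeff_le S g
    exact (pow_le_of_le_one (norm_nonneg _) (hle.trans (by exact_mod_cast hS)) hq).trans hle
  simp only [moment, Pi.one_apply, one_mul]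
  refine (sum_le_card_nsmul _ _ _ fun g _ => hpow g).trans_eq ?_
  simp [mul_comm]

theorem levelMoment_indicatorCoeff_le {S : Finset ℤ} {N q : ℕ} (hN : 0 < N) (hq : q ≠ 0)
    (hS : ∀ x ∈ S, ∀ y ∈ S, x ≡ y [ZMOD N] → x = y) :
    levelMoment (1 : (Fin k → ZMod M) → ℝ) (indicatorCoeff S) q N ≤ #S * (M : ℝ) ^ k := by
  have hcard : ∑ r ∈ range N, (#{x ∈ S | x ≡ r [ZMOD N]} : ℝ) = #S := by
    have := congrArg (fun f => expSum f (0 : Fin k → ZMod M))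
      (residuePart_one_eq_sum_range (indicatorCoeff S) hN)
    simp only [expSum_sum, residuePart_indicatorCoeff, expSum_indicatorCoeff,
      AddChar.map_zero_eq_one, Circle.coe_one, sum_const, nsmul_eq_mul, mul_one] at this
    exact_mod_cast this.symm
  rw [← hcard, sum_mul]
  refine sum_le_sum fun r _ => ?_
  rw [residuePart_indicatorCoeff]
  refine moment_indicatorCoeff_le (card_le_one.2 fun x hx y hy => ?_) hq
  rw [mem_filter] at hx hy
  exact hS x hx.1 y hy.1 (hx.2.trans hy.2.symm)

theorem sum_norm_expSum_indicatorCoeff_pow (S : Finset ℤ) (s : ℕ)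
    [DecidableEq (AddChar (Fin k → ZMod M) Circle)] :
    ∑ g : Fin k → ZMod M, ‖expSum (indicatorCoeff S) g‖ ^ (2 * s)
      = (M : ℝ) ^ k * #{xy ∈ Fintype.piFinset (fun _ : Fin s => S) ×ˢ
        Fintype.piFinset (fun _ : Fin s => S) |
        ∑ i, (momentChar (xy.1 i) : AddChar (Fin k → ZMod M) Circle)
          = ∑ i, momentChar (xy.2 i)} := by
  classical
  set B := Fintype.piFinset fun _ : Fin s => S
  set ψ : (Fin s → ℤ) → AddChar (Fin k → ZMod M) ℂ := fun x =>
    Circle.coeHom.compAddChar (∑ i, momentChar (x i))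
  have hψ : ∀ x y, ψ x = ψ y ↔
      ∑ i, (momentChar (x i) : AddChar (Fin k → ZMod M) Circle)
        = ∑ i, momentChar (y i) := fun x y =>
    ⟨fun h => by ext g; exact DFunLike.congr_fun h g, fun h => by simp only [ψ, h]⟩
  have hpow : ∀ g, expSum (indicatorCoeff S) g ^ s = ∑ x ∈ B, 1 * ψ x g := fun g => by
    rw [expSum_indicatorCoeff, sum_pow']
    refine sum_congr rfl fun x _ => ?_
    simp only [ψ, one_mul, MonoidHom.compAddChar_apply, Function.comp_apply, AddChar.sum_apply,
      map_prod]
    rfl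
  have horth := sum_norm_sum_mul_addChar_sq B 1 ψ
  simp only [Pi.one_apply, ← hpow, star_one, mul_one, hψ, norm_pow, ← pow_mul'] at horth
  rw [← sum_product', sum_boole, Fintype.card_fun, ZMod.card, Fintype.card_fin] at horth
  exact_mod_cast horth

theorem sum_momentChar_eq_of_sum_pow_eq {ι : Type*} [Fintype ι] {x y : ι → ℤ}
    (h : ∀ j ∈ Icc 1 k, ∑ i, (x i ^ j - y i ^ j) = 0) :
    ∑ i, (momentChar (x i) : AddChar (Fin k → ZMod M) Circle) = ∑ i, momentChar (y i) := by
  have hpow : ∀ j : Fin k, ∑ i, (x i : ZMod M) ^ (j + 1 : ℕ) = ∑ i, (y i : ZMod M) ^ (j + 1 : ℕ) :=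
    fun j => by
      have hj := h (j + 1) (mem_Icc.2 ⟨by omega, by omega⟩)
      rw [sum_sub_distrib, sub_eq_zero] at hj
      exact_mod_cast congrArg (Int.cast : ℤ → ZMod M) hj
  have heval : ∀ (z : ι → ℤ) (g : Fin k → ZMod M), (∑ i, momentChar (z i)) g
      = ZMod.toCircle (∑ j, g j * ∑ i, (z i : ZMod M) ^ (j + 1 : ℕ)) := fun z g => by
    simp only [AddChar.sum_apply, momentChar_apply, mul_sum]
    rw [sum_comm]
    exact (map_prod (ZMod.toCircle (N := M)).toMonoidHom (fun i => Multiplicative.ofAdd _) _).symm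
  exact DFunLike.ext _ _ fun g => by rw [heval, heval, sum_congr rfl fun j _ => by rw [hpow]]

theorem Jcount_mul_le (s : ℕ) (X : ℝ) :
    (Jcount s k X : ℝ) * (M : ℝ) ^ k
      ≤ ∑ g : Fin k → ZMod M, ‖expSum (indicatorCoeff (Icc 1 ⌊X⌋)) g‖ ^ (2 * s) := by
  classical
  rw [sum_norm_expSum_indicatorCoeff_pow, mul_comm, Jcount, ← Set.ncard_coe_finset]
  gcongr
  · exact finite_toSet _
  rintro ⟨x, y⟩ ⟨hx, hy, hxy⟩
  simp only [coe_filter, Set.mem_ofPred_eq, mem_product,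
    Fintype.mem_piFinset, mem_Icc, Int.le_floor]
  exact ⟨⟨hx, hy⟩, sum_momentChar_eq_of_sum_pow_eq hxy⟩

theorem card_Icc_one_floor_le {X : ℝ} (hX : 0 ≤ X) : (#(Icc 1 ⌊X⌋) : ℝ) ≤ X := by
  rw [Int.card_Icc, add_sub_cancel_right]
  exact Nat.floor_le hX

end Counting

theorem critMoment_indicatorCoeff_Icc_le {p k n : ℕ} [NeZero p] (hk : 0 < k) {X : ℝ} (hX : 0 ≤ X)
    (hXp : X ≤ (p : ℝ) ^ n) :
    critMoment p k n (indicatorCoeff (Icc 1 ⌊X⌋)) n ≤ X * ((p ^ (k * n) : ℕ) : ℝ) ^ k := by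
  have hfloor : ⌊X⌋ ≤ ((p ^ n : ℕ) : ℤ) := by exact_mod_cast (Int.floor_le X).trans hXp
  refine (levelMoment_indicatorCoeff_le (pow_pos (NeZero.pos p) n) (by positivity)
    fun x hx y hy hxy => ?_).trans (by gcongr; exact card_Icc_one_floor_le hX)
  rw [mem_Icc] at hx hy
  exact (sub_eq_zero.1 (Int.eq_zero_of_abs_lt_dvd hxy.dvd (abs_lt.2 (by omega)))).symm

theorem HasDecouplingExponent.exists_moment_indicatorCoeff_Icc_le {p k : ℕ} [NeZero p] {η : ℝ}
    (h : HasDecouplingExponent p k η) (hp : 1 < p) (hk : 0 < k) (hη : 0 ≤ η) :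
    ∃ C : ℝ, 0 < C ∧ ∀ X : ℝ, 1 ≤ X → ∃ (M : ℕ) (_ : NeZero M),
      moment (1 : (Fin k → ZMod M) → ℝ) (indicatorCoeff (Icc 1 ⌊X⌋)) (k * (k + 1))
        ≤ C * X ^ (crit k + η) * (M : ℝ) ^ k := by
  have hp1 : (1 : ℝ) < p := by exact_mod_cast hp
  have hp0 : (0 : ℝ) < p := by linarith
  obtain ⟨C, hC, hdec⟩ := h
  have hexp : 0 ≤ crit k - 1 + η := by linarith [one_le_crit hk]
  refine ⟨C * (p : ℝ) ^ (crit k - 1 + η), by positivity, fun X hX => ?_⟩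
  have hX0 : 0 < X := by linarith
  obtain ⟨n, hpX, hXp⟩ := exists_nat_pow_near hX hp1
  set f := indicatorCoeff (Icc 1 ⌊X⌋)
  set N := n + 1
  have hpN : (p : ℝ) ^ N ≤ p * X := by
    rw [pow_succ']
    gcongr
  have hsplit : X ^ (crit k + η) = X ^ (crit k - 1 + η) * X := by
    rw [← Real.rpow_add_one hX0.ne']
    ring_nf
  refine ⟨p ^ (k * N), inferInstance, ?_⟩
  calc moment 1 f (k * (k + 1)) = critMoment p k N f 0 := by
        rw [critMoment, pow_zero, levelMoment_one]
    _ ≤ C * (p : ℝ) ^ (η * N) * (p : ℝ) ^ (N * (crit k - 1)) * critMoment p k N f N := hdec N f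
    _ = C * ((p : ℝ) ^ N) ^ (crit k - 1 + η) * critMoment p k N f N := by
        rw [mul_assoc C, ← Real.rpow_add hp0, ← Real.rpow_natCast_mul hp0.le]
        ring_nf
    _ ≤ C * (p * X) ^ (crit k - 1 + η) * (X * ((p ^ (k * N) : ℕ) : ℝ) ^ k) := by
        gcongr
        · exact critMoment_nonneg p k N f N
        · exact critMoment_indicatorCoeff_Icc_le hk hX0.le hXp.le
    _ = C * (p : ℝ) ^ (crit k - 1 + η) * X ^ (crit k + η) * ((p ^ (k * N) : ℕ) : ℝ) ^ k := by
        rw [Real.mul_rpow hp0.le hX0.le, hsplit]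
        ring

theorem exists_moment_indicatorCoeff_Icc_le (k : ℕ) {ε : ℝ} (hε : 0 < ε) :
    ∃ C : ℝ, 0 < C ∧ ∀ X : ℝ, 1 ≤ X → ∃ (M : ℕ) (_ : NeZero M),
      moment (1 : (Fin k → ZMod M) → ℝ) (indicatorCoeff (Icc 1 ⌊X⌋)) (k * (k + 1))
        ≤ C * X ^ (crit k + ε) * (M : ℝ) ^ k := by
  rcases k.eq_zero_or_pos with rfl | hk
  · refine ⟨1, one_pos, fun X hX => ⟨1, inferInstance, ?_⟩⟩
    simpa [moment, crit] using Real.one_le_rpow hX hε.le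
  obtain ⟨p, hle, hp⟩ := Nat.exists_infinite_primes (16 + k)
  have : Fact p.Prime := ⟨hp⟩
  exact (decouplesEps (by omega : 16 ≤ p) hk (by omega) ε hε).exists_moment_indicatorCoeff_Icc_le
    hp.one_lt hk hε.le

theorem rpow_le_rpow_of_le_of_le_sq {X y t e : ℝ} (hX : 1 ≤ X) (hy : 0 ≤ y) (hyX : y ≤ X)
    (hXy : X ≤ y ^ 2) (ht : t ≤ e) (ht2 : t / 2 ≤ e) : y ^ t ≤ X ^ e := by
  rcases le_total 0 t with h | h
  · exact (Real.rpow_le_rpow hy hyX h).trans (Real.rpow_le_rpow_of_exponent_le hX ht)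
  · calc y ^ t = (y ^ 2) ^ (t / 2) := by
          rw [← Real.rpow_natCast_mul hy]
          push_cast
          ring_nf
      _ ≤ X ^ (t / 2) := Real.rpow_le_rpow_of_nonpos (by linarith) hXy (by linarith)
      _ ≤ X ^ e := Real.rpow_le_rpow_of_exponent_le hX ht2

theorem pow_le_rpow_add_rpow_mul_pow {X y E : ℝ} {s q : ℕ} (hX : 1 ≤ X) (hy : 0 ≤ y) (hyX : y ≤ X)
    (hs : s ≤ E) (hq : 2 * (s : ℝ) - q / 2 ≤ E) :
    y ^ (2 * s) ≤ X ^ E + X ^ (E - q / 2) * y ^ q := by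
  have : 0 < X := by linarith
  rcases le_total (y ^ 2) X with hXy | hXy
  · refine le_add_of_le_of_nonneg ?_ (by positivity)
    calc y ^ (2 * s) = (y ^ 2) ^ s := pow_mul _ _ _
      _ ≤ X ^ s := by gcongr
      _ = X ^ (s : ℝ) := (Real.rpow_natCast X s).symm
      _ ≤ X ^ E := Real.rpow_le_rpow_of_exponent_le hX hs
  · refine le_add_of_nonneg_of_le (by positivity) ?_
    have hy0 : 0 < y := by
      by_contra! h
      nlinarith
    calc y ^ (2 * s) = y ^ (2 * (s : ℝ) - q) * y ^ q := by
          rw [← Real.rpow_natCast y q, ← Real.rpow_add hy0, sub_add_cancel, ← Real.rpow_natCast]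
          push_cast
          rfl
      _ ≤ X ^ (E - q / 2) * y ^ q := by
        gcongr
        exact rpow_le_rpow_of_le_of_le_sq hX hy hyX hXy (by linarith) (by linarith)

theorem Jcount_mul_le_moment {k M : ℕ} [NeZero M] {s : ℕ} {X E : ℝ} (hX : 1 ≤ X)
    (hs : s ≤ E) (hk : 2 * (s : ℝ) - crit k ≤ E) :
    Jcount s k X * (M : ℝ) ^ k ≤ X ^ E * (M : ℝ) ^ k + X ^ (E - crit k) *
      moment (1 : (Fin k → ZMod M) → ℝ) (indicatorCoeff (Icc 1 ⌊X⌋)) (k * (k + 1)) := by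
  have hcrit : crit k = (k * (k + 1) : ℕ) / 2 := by
    rw [crit]
    push_cast
    rfl
  calc Jcount s k X * (M : ℝ) ^ k
      ≤ ∑ g : Fin k → ZMod M, ‖expSum (indicatorCoeff (Icc 1 ⌊X⌋)) g‖ ^ (2 * s) :=
        Jcount_mul_le s X
    _ ≤ ∑ g : Fin k → ZMod M, (X ^ E + X ^ (E - crit k)
          * ‖expSum (indicatorCoeff (Icc 1 ⌊X⌋)) g‖ ^ (k * (k + 1))) := by
        rw [hcrit] at hk ⊢
        gcongr with g
        exact pow_le_rpow_add_rpow_mul_pow hX (norm_nonneg _)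
          ((norm_expSum_indicatorCoeff_le _ g).trans (card_Icc_one_floor_le (by linarith))) hs hk
    _ = _ := by
        simp only [sum_add_distrib, sum_const, card_univ, Fintype.card_fun, ZMod.card,
          Fintype.card_fin, nsmul_eq_mul, Nat.cast_pow, ← mul_sum, moment, Pi.one_apply, one_mul]
        ring

end Vinogradov

theorem theorem1_2_part_i_general (k s : ℕ) (ε : ℝ) (hε : 0 < ε) :
    ∃ C : ℝ, 0 < C ∧ ∀ X : ℝ, 1 ≤ X →
      (Jcount s k X : ℝ) ≤
        C * X ^ (max (s : ℝ) (2 * (s : ℝ) - (k : ℝ) * ((k : ℝ) + 1) / 2) + ε) := by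
  obtain ⟨C, hC, hmoment⟩ := Vinogradov.exists_moment_indicatorCoeff_Icc_le k hε
  refine ⟨1 + C, by positivity, fun X hX => ?_⟩
  obtain ⟨M, hM, hle⟩ := hmoment X hX
  have hX0 : 0 < X := by linarith
  have hM0 : (0 : ℝ) < (M : ℝ) ^ k := pow_pos (by exact_mod_cast NeZero.pos M) k
  set E := max (s : ℝ) (2 * (s : ℝ) - (k : ℝ) * ((k : ℝ) + 1) / 2)
  have hsplit : X ^ (E + ε) = X ^ (E - Vinogradov.crit k) * X ^ (Vinogradov.crit k + ε) := by
    rw [← Real.rpow_add hX0]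
    ring_nf
  refine le_of_mul_le_mul_right ?_ hM0
  calc (Jcount s k X : ℝ) * (M : ℝ) ^ k
      ≤ X ^ E * (M : ℝ) ^ k + X ^ (E - Vinogradov.crit k) *
          Vinogradov.moment 1 (Vinogradov.indicatorCoeff (Finset.Icc 1 ⌊X⌋)) (k * (k + 1)) :=
        Vinogradov.Jcount_mul_le_moment hX (le_max_left _ _) (le_max_right _ _)
    _ ≤ X ^ E * (M : ℝ) ^ k
          + X ^ (E - Vinogradov.crit k) * (C * X ^ (Vinogradov.crit k + ε) * (M : ℝ) ^ k) := by
        gcongr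
    _ = (X ^ E + C * X ^ (E + ε)) * (M : ℝ) ^ k := by
        rw [hsplit]
        ring
    _ ≤ (1 + C) * X ^ (E + ε) * (M : ℝ) ^ k := by
        rw [one_add_mul]
        gcongr
        linarith

/-- Theorem 1.2(i): for 2m ≤ k and s ≥ (k-m)² + (k-m), one has
J_{s,k}(X) ≤ C X^{2s - k(k+1)/2 + m² + ε}. -/
theorem theorem1_2_part_i (k s m : ℕ) (hm : 2 * m ≤ k)
    (hs : ((k : ℝ) - m) ^ 2 + ((k : ℝ) - m) ≤ (s : ℝ)) (ε : ℝ) (hε : 0 < ε) :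
    ∃ C : ℝ, 0 < C ∧ ∀ X : ℝ, 1 ≤ X →
      (Jcount s k X : ℝ) ≤
        C * X ^ (2 * (s : ℝ) - (k : ℝ) * ((k : ℝ) + 1) / 2 + (m : ℝ) ^ 2 + ε) := by
  obtain ⟨C, hC, hJ⟩ := theorem1_2_part_i_general k s ε hε
  have hkm : (2 * m : ℝ) ≤ k := by exact_mod_cast hm
  refine ⟨C, hC, fun X hX => (hJ X hX).trans ?_⟩
  gcongr
  exact max_le (by nlinarith) (le_add_of_nonneg_right (sq_nonneg _))
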